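/- If (G, S, L) is a canvas and S is a path of length one, then G has an L-coloring. -/

import Mathlib

/-!
Common definitions: plane graphs (given by a concrete embedding in the plane),
outer face, canvases, list colorings, governments, harmonicas and coloring
harmonicas, following Postle–Thomas,
"Five-list-coloring graphs on surfaces III".
-/

open Set

universe u

/-- A finite simple graph together with an embedding in the plane:
each vertex gets a point, each edge a simple arc joining its endpoints;
arcs avoid other vertices, and two distinct edges meet only in common
endpoints. -/
structure PlaneGraph (V : Type u) where
  verts : Set V
  Adj : V → V → Prop
  finite_verts : verts.Finite
  adj_symm : ∀ u v, Adj u v → Adj v u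
  adj_irrefl : ∀ v, ¬Adj v v
  adj_mem : ∀ u v, Adj u v → u ∈ verts
  pos : V → ℝ × ℝ
  arc : Sym2 V → Set (ℝ × ℝ)
  pos_injOn : Set.InjOn pos verts
  arc_arc : ∀ u v, Adj u v → ∃ f : ℝ → ℝ × ℝ,
    ContinuousOn f (Set.Icc 0 1) ∧ Set.InjOn f (Set.Icc 0 1) ∧
    f '' Set.Icc 0 1 = arc s(u, v) ∧ f 0 = pos u ∧ f 1 = pos v
  arc_avoid : ∀ u v, Adj u v → ∀ w ∈ verts, pos w ∈ arc s(u, v) → w = u ∨ w = v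
  arc_meet : ∀ u v x y, Adj u v → Adj x y → s(u, v) ≠ s(x, y) →
    arc s(u, v) ∩ arc s(x, y) ⊆ pos '' (({u, v} : Set V) ∩ ({x, y} : Set V))

namespace PlaneGraph

variable {V : Type u}

/-- The point set of the drawing of the plane graph. -/
def image (G : PlaneGraph V) : Set (ℝ × ℝ) :=
  G.pos '' G.verts ∪ ⋃ (u : V) (v : V) (_ : G.Adj u v), G.arc s(u, v)

/-- The outer (unbounded) face of the drawing. -/
def outerFace (G : PlaneGraph V) : Set (ℝ × ℝ) :=
  {p | p ∉ G.image ∧ ¬Bornology.IsBounded (connectedComponentIn G.imageᶜ p)}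

/-- A vertex incident with (i.e. on the boundary of) the outer face. -/
def OnOuter (G : PlaneGraph V) (v : V) : Prop := G.pos v ∈ frontier G.outerFace

/-- An edge incident with (i.e. on the boundary of) the outer face. -/
def EdgeOnOuter (G : PlaneGraph V) (u v : V) : Prop :=
  G.arc s(u, v) ⊆ frontier G.outerFace

/-- The vertices of the boundary of the outer face. -/
def boundaryVerts (G : PlaneGraph V) : Set V := {v | v ∈ G.verts ∧ G.OnOuter v}

/-- Connectivity of a plane graph. -/
def Connected (G : PlaneGraph V) : Prop :=
  G.verts.Nonempty ∧ ∀ u ∈ G.verts, ∀ v ∈ G.verts, Relation.ReflTransGen G.Adj u v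

/-- `H` is a (plane) subgraph of `G`, drawn the same way. -/
def IsSubgraph (H G : PlaneGraph V) : Prop :=
  H.verts ⊆ G.verts ∧ (∀ u v, H.Adj u v → G.Adj u v) ∧
  (∀ v ∈ H.verts, H.pos v = G.pos v) ∧
  (∀ u v, H.Adj u v → H.arc s(u, v) = G.arc s(u, v))

/-- Delete a set of vertices (and all incident edges) from a plane graph. -/
def deleteVerts (G : PlaneGraph V) (s : Set V) : PlaneGraph V where
  verts := G.verts \ s
  Adj u v := G.Adj u v ∧ u ∉ s ∧ v ∉ s
  finite_verts := G.finite_verts.subset Set.diff_subset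
  adj_symm := fun u v h => ⟨G.adj_symm u v h.1, h.2.2, h.2.1⟩
  adj_irrefl := fun v h => G.adj_irrefl v h.1
  adj_mem := fun u v h => ⟨G.adj_mem u v h.1, h.2.1⟩
  pos := G.pos
  arc := G.arc
  pos_injOn := G.pos_injOn.mono Set.diff_subset
  arc_arc := fun u v h => G.arc_arc u v h.1
  arc_avoid := fun u v h w hw hm => G.arc_avoid u v h.1 w hw.1 hm
  arc_meet := fun u v x y h h' hne => G.arc_meet u v x y h.1 h'.1 hne

/-- `G` has a proper coloring from the lists `L`. -/
def HasLColoring (G : PlaneGraph V) (L : V → Finset ℕ) : Prop :=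
  ∃ φ : V → ℕ, (∀ v ∈ G.verts, φ v ∈ L v) ∧ ∀ u v, G.Adj u v → φ u ≠ φ v

/-- A vertex of degree exactly one. -/
def DegreeOne (G : PlaneGraph V) (x : V) : Prop :=
  (∃ a, G.Adj x a) ∧ ∀ a b, G.Adj x a → G.Adj x b → a = b

end PlaneGraph

/-- The cyclic successor of an index in a list. -/
def cycNext {V : Type u} (C : List V) (i : Fin C.length) : Fin C.length :=
  ⟨((i : ℕ) + 1) % C.length, Nat.mod_lt _ (lt_of_le_of_lt (Nat.zero_le _) i.isLt)⟩

/-- The list `C` is a cycle of `G` whose image is exactly the boundary of the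
outer face of `G`; i.e. `G` is a plane graph with outer cycle `C`. -/
def PlaneGraph.IsOuterCycle {V : Type u} (G : PlaneGraph V) (C : List V) : Prop :=
  C.Nodup ∧ 3 ≤ C.length ∧ (∀ v ∈ C, v ∈ G.verts) ∧
  (∀ i : Fin C.length, G.Adj (C.get i) (C.get (cycNext C i))) ∧
  frontier G.outerFace =
    G.pos '' {v | v ∈ C} ∪ ⋃ i : Fin C.length, G.arc s(C.get i, C.get (cycNext C i))

/-- `pq` is an edge of the cycle (given as a list) `C`. -/
def IsCycleEdge {V : Type u} (C : List V) (p q : V) : Prop :=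
  ∃ i : Fin C.length, s(p, q) = s(C.get i, C.get (cycNext C i))

/-- `(G, S, L)` is a canvas, where the subgraph `S` of the boundary of the
outer face of `G` is given by its vertex set `Sverts` and adjacency `SAdj`. -/
structure IsCanvas {V : Type u} (G : PlaneGraph V) (Sverts : Set V) (SAdj : V → V → Prop)
    (L : V → Finset ℕ) : Prop where
  sadj_symm : ∀ u v, SAdj u v → SAdj v u
  sadj_sub : ∀ u v, SAdj u v → G.Adj u v
  sadj_mem : ∀ u v, SAdj u v → u ∈ Sverts
  sverts_sub : Sverts ⊆ G.verts
  sverts_outer : ∀ v ∈ Sverts, G.OnOuter v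
  sedges_outer : ∀ u v, SAdj u v → G.EdgeOnOuter u v
  lists_nonempty : ∀ v ∈ G.verts, (L v).Nonempty
  card_inner : ∀ v ∈ G.verts, ¬G.OnOuter v → 5 ≤ (L v).card
  card_outside_S : ∀ v ∈ G.verts, v ∉ Sverts → 3 ≤ (L v).card
  scolorable : ∃ φ : V → ℕ, (∀ v ∈ Sverts, φ v ∈ L v) ∧ ∀ u v, SAdj u v → φ u ≠ φ v

/-- The adjacency relation of the single-edge path `p₁p₂`. -/
def pathAdj {V : Type u} (p1 p2 : V) : V → V → Prop :=
  fun u v => (u = p1 ∧ v = p2) ∨ (u = p2 ∧ v = p1)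

/-- `(G, P, L)` is a canvas whose precolored subgraph is a path `P = p₁p₂` of
length one (in the boundary of the outer face of `G`). -/
def IsPathCanvas {V : Type u} (G : PlaneGraph V) (p1 p2 : V) (L : V → Finset ℕ) : Prop :=
  p1 ≠ p2 ∧ IsCanvas G {p1, p2} (pathAdj p1 p2) L

/-- `c = (c₁, c₂)` is a proper `L`-coloring of the edge `p₁p₂`. -/
def ProperEdgeColoring {V : Type u} (L : V → Finset ℕ) (p1 p2 : V) (c : ℕ × ℕ) : Prop :=
  c.1 ∈ L p1 ∧ c.2 ∈ L p2 ∧ c.1 ≠ c.2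

/-- `Φ_T(P', 𝒞)`: the colorings of the edge `q₁q₂` extendable to an `L`-coloring
of `G` whose restriction to `p₁p₂` lies in `C`. -/
def Phi {V : Type u} (G : PlaneGraph V) (L : V → Finset ℕ) (p1 p2 q1 q2 : V)
    (C : Set (ℕ × ℕ)) : Set (ℕ × ℕ) :=
  {c | ∃ φ : V → ℕ, (∀ v ∈ G.verts, φ v ∈ L v) ∧ (∀ u v, G.Adj u v → φ u ≠ φ v) ∧
    (φ p1, φ p2) ∈ C ∧ φ q1 = c.1 ∧ φ q2 = c.2}

/-- The set of colors used on the first vertex of the path. -/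
def fstColors (C : Set (ℕ × ℕ)) : Set ℕ := Prod.fst '' C

/-- The set of colors used on the second vertex of the path. -/
def sndColors (C : Set (ℕ × ℕ)) : Set ℕ := Prod.snd '' C

/-- A dictatorship: at least two (distinct) colorings, all agreeing on one of
the two vertices (the dictator). -/
def IsDictatorship (C : Set (ℕ × ℕ)) : Prop :=
  (∃ c ∈ C, ∃ d ∈ C, c ≠ d) ∧
  ((∃ a, ∀ c ∈ C, c.1 = a) ∨ (∃ a, ∀ c ∈ C, c.2 = a))

/-- A democracy: exactly the two colorings `(x, y)` and `(y, x)`. -/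
def IsDemocracy (C : Set (ℕ × ℕ)) : Prop :=
  ∃ x y : ℕ, x ≠ y ∧ C = {(x, y), (y, x)}

/-- A government is a dictatorship or a democracy. -/
def IsGovernment (C : Set (ℕ × ℕ)) : Prop := IsDictatorship C ∨ IsDemocracy C

/-- A confederacy: not a government, but the union of two governments. -/
def IsConfederacy (C : Set (ℕ × ℕ)) : Prop :=
  ¬IsGovernment C ∧ ∃ C1 C2 : Set (ℕ × ℕ), IsGovernment C1 ∧ IsGovernment C2 ∧ C = C1 ∪ C2

/-- The canvas `(G, p₁p₂, L)` is a harmonica from the path `p₁p₂` to the path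
`q₁q₂` with government `C`. -/
inductive IsHarmonica {V : Type u} (L : V → Finset ℕ) :
    PlaneGraph V → V → V → V → V → Set (ℕ × ℕ) → Prop where
  /-- Rule (i): `G = P = P'`. -/
  | same (G : PlaneGraph V) (p1 p2 q1 q2 : V) (C : Set (ℕ × ℕ))
      (hcanvas : IsPathCanvas G p1 p2 L)
      (hproper : ∀ c ∈ C, ProperEdgeColoring L p1 p2 c)
      (hgov : IsGovernment C)
      (hq : (q1 = p1 ∧ q2 = p2) ∨ (q1 = p2 ∧ q2 = p1))
      (hverts : G.verts = {p1, p2})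
      (hedges : ∀ u v, G.Adj u v → pathAdj p1 p2 u v) :
      IsHarmonica L G p1 p2 q1 q2 C
  /-- Rule (ii): `C` is a dictatorship, `G = P ∪ P'`, `V(P) ∩ V(P') = {z}`
  where `z` is the dictator. -/
  | cherry (G : PlaneGraph V) (p1 p2 q1 q2 z : V) (C : Set (ℕ × ℕ))
      (hcanvas : IsPathCanvas G p1 p2 L)
      (hproper : ∀ c ∈ C, ProperEdgeColoring L p1 p2 c)
      (hdict : IsDictatorship C)
      (hq : q1 ≠ q2) (hqadj : G.Adj q1 q2) (hqout : G.EdgeOnOuter q1 q2)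
      (hverts : G.verts = {p1, p2, q1, q2})
      (hedges : ∀ u v, G.Adj u v → pathAdj p1 p2 u v ∨ pathAdj q1 q2 u v)
      (hz : (({p1, p2} : Set V) ∩ ({q1, q2} : Set V)) = {z})
      (hzdict : (z = p1 ∧ ∃ a, ∀ c ∈ C, c.1 = a) ∨ (z = p2 ∧ ∃ a, ∀ c ∈ C, c.2 = a)) :
      IsHarmonica L G p1 p2 q1 q2 C
  /-- Rule (iii): `C` is a dictatorship with dictator `z ∈ V(P)` in color `c`,
  sitting on a triangle `z u₁ u₂`. -/
  | dict (G : PlaneGraph V) (p1 p2 q1 q2 z w u1 u2 : V) (c : ℕ) (L0 : Finset ℕ)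
      (C C' : Set (ℕ × ℕ))
      (hcanvas : IsPathCanvas G p1 p2 L)
      (hproper : ∀ d ∈ C, ProperEdgeColoring L p1 p2 d)
      (hdict : IsDictatorship C)
      (hq : q1 ≠ q2) (hqadj : G.Adj q1 q2) (hqout : G.EdgeOnOuter q1 q2)
      (hz : (z = p1 ∧ w = p2 ∧ (∀ d ∈ C, d.1 = c) ∧
              (u1 = w → sndColors C = (L0 : Set ℕ)) ∧
              (u2 = w → sndColors C = (L0 : Set ℕ))) ∨
            (z = p2 ∧ w = p1 ∧ (∀ d ∈ C, d.2 = c) ∧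
              (u1 = w → fstColors C = (L0 : Set ℕ)) ∧
              (u2 = w → fstColors C = (L0 : Set ℕ))))
      (hzu1 : G.Adj z u1) (hzu2 : G.Adj z u2) (hu12 : G.Adj u1 u2)
      (hL0 : L0.card = 2)
      (hLu1 : u1 ∉ ({p1, p2} : Set V) → L u1 = L0 ∪ {c})
      (hLu2 : u2 ∉ ({p1, p2} : Set V) → L u2 = L0 ∪ {c})
      (hu1P : u1 ∈ ({p1, p2} : Set V) → u1 = w)
      (hu2P : u2 ∈ ({p1, p2} : Set V) → u2 = w)
      (hdem : IsDemocracy C')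
      (hC'1 : fstColors C' = (L0 : Set ℕ)) (hC'2 : sndColors C' = (L0 : Set ℕ))
      (hrec : IsHarmonica L (G.deleteVerts (({p1, p2} : Set V) \ {u1, u2})) u1 u2 q1 q2 C') :
      IsHarmonica L G p1 p2 q1 q2 C
  /-- Rule (iv), with `i = 1`: `C` is a democracy, `z` is a common neighbor of
  `p₁, p₂`, and `p₁` is deleted. -/
  | demo1 (G : PlaneGraph V) (p1 p2 q1 q2 z : V) (a b c : ℕ) (L0 : Finset ℕ)
      (C C' : Set (ℕ × ℕ))
      (hcanvas : IsPathCanvas G p1 p2 L)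
      (hproper : ∀ d ∈ C, ProperEdgeColoring L p1 p2 d)
      (hdemC : IsDemocracy C)
      (hq : q1 ≠ q2) (hqadj : G.Adj q1 q2) (hqout : G.EdgeOnOuter q1 q2)
      (hz1 : G.Adj z p1) (hz2 : G.Adj z p2)
      (hLz : L z = L0 ∪ {c})
      (hC1 : fstColors C = (L0 : Set ℕ)) (hC2 : sndColors C = (L0 : Set ℕ))
      (hab : a ≠ b) (hL0ab : (L0 : Set ℕ) = {a, b})
      (hC' : C' = {(c, a), (c, b)})
      (hrec : IsHarmonica L (G.deleteVerts {p1}) z p2 q1 q2 C') :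
      IsHarmonica L G p1 p2 q1 q2 C
  /-- Rule (iv), with `i = 2`: `C` is a democracy, `z` is a common neighbor of
  `p₁, p₂`, and `p₂` is deleted. -/
  | demo2 (G : PlaneGraph V) (p1 p2 q1 q2 z : V) (a b c : ℕ) (L0 : Finset ℕ)
      (C C' : Set (ℕ × ℕ))
      (hcanvas : IsPathCanvas G p1 p2 L)
      (hproper : ∀ d ∈ C, ProperEdgeColoring L p1 p2 d)
      (hdemC : IsDemocracy C)
      (hq : q1 ≠ q2) (hqadj : G.Adj q1 q2) (hqout : G.EdgeOnOuter q1 q2)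
      (hz1 : G.Adj z p1) (hz2 : G.Adj z p2)
      (hLz : L z = L0 ∪ {c})
      (hC1 : fstColors C = (L0 : Set ℕ)) (hC2 : sndColors C = (L0 : Set ℕ))
      (hab : a ≠ b) (hL0ab : (L0 : Set ℕ) = {a, b})
      (hC' : C' = {(c, a), (c, b)})
      (hrec : IsHarmonica L (G.deleteVerts {p2}) z p1 q1 q2 C') :
      IsHarmonica L G p1 p2 q1 q2 C

/-- `(G, L)` is a coloring harmonica from `uv` to `w` (source `Sum.inr (u, v)`)
or from `u` to `w` (source `Sum.inl u`). -/
inductive IsColoringHarmonica {V : Type u} [DecidableEq V] :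
    PlaneGraph V → (V → Finset ℕ) → V ⊕ V × V → V → Prop where
  /-- `G` is a triangle with vertex set `{u, v, w}`, `L(u) = L(v) = L(w)` and
  `|L(u)| = 2`. -/
  | tri (G : PlaneGraph V) (L : V → Finset ℕ) (u v w : V)
      (hconn : G.Connected) (huv : u ≠ v) (huw : u ≠ w) (hvw : v ≠ w)
      (hu : G.OnOuter u) (hv : G.OnOuter v) (hw : G.OnOuter w)
      (huvout : G.EdgeOnOuter u v)
      (hverts : G.verts = {u, v, w})
      (hadjuv : G.Adj u v) (hadjvw : G.Adj v w) (hadjuw : G.Adj u w)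
      (hLuv : L u = L v) (hLvw : L v = L w) (hcard : (L u).card = 2) :
      IsColoringHarmonica G L (Sum.inr (u, v)) w
  /-- There is a triangle `uvz` on the outer face; delete one or both of
  `u, v` and recurse from `z`. -/
  | step (G : PlaneGraph V) (L : V → Finset ℕ) (u v w z : V) (s : Set V)
      (hconn : G.Connected) (huv : u ≠ v) (huw : u ≠ w) (hvw : v ≠ w)
      (hu : G.OnOuter u) (hv : G.OnOuter v) (hw : G.OnOuter w)
      (huvout : G.EdgeOnOuter u v)
      (hadjuv : G.Adj u v) (hadjuz : G.Adj u z) (hadjvz : G.Adj v z)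
      (hz : G.OnOuter z)
      (hLuv : L u = L v) (hsub : L u ⊆ L z)
      (hcardu : (L u).card = 2) (hcardz : (L z).card = 3)
      (hs : s = {u} ∨ s = {v} ∨ s = ({u, v} : Set V))
      (hrec : IsColoringHarmonica (G.deleteVerts s)
        (Function.update L z (L z \ L u)) (Sum.inl z) w) :
      IsColoringHarmonica G L (Sum.inr (u, v)) w
  /-- `|L(u)| = 1`, `u` sits on a triangle `uxy`; delete `u` and recurse
  from `xy`. -/
  | vert (G : PlaneGraph V) (L : V → Finset ℕ) (u w x y : V)
      (hconn : G.Connected) (huw : u ≠ w)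
      (hu : G.OnOuter u) (hw : G.OnOuter w)
      (hx : G.OnOuter x) (hy : G.OnOuter y)
      (hadjux : G.Adj u x) (hadjuy : G.Adj u y) (hadjxy : G.Adj x y)
      (hcardu : (L u).card = 1)
      (hLxy : L x \ L u = L y \ L u) (hcardx : (L x \ L u).card = 2)
      (hrec : IsColoringHarmonica (G.deleteVerts {u})
        (Function.update (Function.update L x (L x \ L u)) y (L y \ L u))
        (Sum.inr (x, y)) w) :
      IsColoringHarmonica G L (Sum.inl u) w

/-- `(G, L)` contains a coloring harmonica `(H, L')` with the given source and
target: `H` is a subgraph of `G` and `L'` agrees with `L` on `V(H)`. -/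
def ContainsColoringHarmonica {V : Type u} [DecidableEq V] (G : PlaneGraph V)
    (L : V → Finset ℕ) (st : V ⊕ V × V) (w : V) : Prop :=
  ∃ (H : PlaneGraph V) (L' : V → Finset ℕ), H.IsSubgraph G ∧
    (∀ x ∈ H.verts, L' x = L x) ∧ IsColoringHarmonica H L' st w

/-- `v` is a cutvertex of the boundary of the outer face of `G`. -/
def BoundaryCutvertex {V : Type u} (G : PlaneGraph V) (v : V) : Prop :=
  ∃ a b : V, a ∈ G.boundaryVerts ∧ b ∈ G.boundaryVerts ∧ a ≠ v ∧ b ≠ v ∧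
    Relation.ReflTransGen (fun x y => G.Adj x y ∧ G.EdgeOnOuter x y) a b ∧
    ¬Relation.ReflTransGen
      (fun x y => G.Adj x y ∧ G.EdgeOnOuter x y ∧ x ≠ v ∧ y ≠ v) a b

open Classical in
/-- The list assignment of the democratic reduction `T(P, L0, x)`:
remove the colors of `L0` from the list of `x` and from the lists of all
neighbors of `P` other than `y`. -/
noncomputable def reducedL {V : Type u} (G : PlaneGraph V) (L : V → Finset ℕ)
    (L0 : Finset ℕ) (Q : List V) (x y : V) : V → Finset ℕ := fun w =>
  if w = x ∨ (w ≠ y ∧ ∃ p ∈ Q, G.Adj w p) then L w \ L0 else L w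

/-- The vertex set of the precolored subgraph of the democratic reduction:
`S ∖ V(P)`, together with `x` as an isolated vertex if its new list is
smaller than 3. -/
def reducedSverts {V : Type u} (Sverts : Set V) (Q : List V) (x : V)
    (L' : V → Finset ℕ) : Set V :=
  {v | (v ∈ Sverts ∧ v ∉ Q) ∨ (v = x ∧ (L' x).card < 3)}

/-- The adjacency of the precolored subgraph of the democratic reduction:
`S ∖ V(P)`. -/
def reducedSAdj {V : Type u} (SAdj : V → V → Prop) (Q : List V) : V → V → Prop :=
  fun u v => SAdj u v ∧ u ∉ Q ∧ v ∉ Q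


/-! ### Logarithms along paths and non-planarity of `K₅` and `K₃,₃` -/

namespace CanvasAux

open Complex in
lemma exists_log (g : ℝ × ℝ → ℂ) (hg : Continuous g) (h0 : ∀ x, g x ≠ 0) :
    ∃ l : ℝ × ℝ → ℂ, Continuous l ∧ ∀ x, exp (l x) = g x := by
  obtain ⟨f, ⟨_, hf⟩, -⟩ := isCoveringMapOn_exp.existsUnique_continuousMap_lifts
    ⟨g, hg⟩ (a₀ := (0, 0)) (e₀ := Complex.log (g (0, 0))) (by simp [Complex.exp_log, h0])
    (by intro x; simpa using h0 x)
  exact ⟨f, f.continuous, fun x => congrFun hf x⟩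

open Complex in
/-- The total change of logarithm of a non-vanishing function along `[0,1]`. -/
noncomputable def dl (f : ℝ → ℂ) : ℂ := by
  classical
  exact if h : ∃ l : ℝ → ℂ, Continuous l ∧ ∀ t, exp (l t) = f t then
    h.choose 1 - h.choose 0 else 0

open Complex in
lemma log_diff_const (l m : ℝ → ℂ) (hl : Continuous l) (hm : Continuous m)
    (c : ℂ) (h : ∀ t, exp (l t) = c * exp (m t)) : l 1 - l 0 = m 1 - m 0 := by
  have h1 : ∀ t, exp (l t - m t) = c := by
    intro t
    rw [Complex.exp_sub, h t]
    field_simp [Complex.exp_ne_zero]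
  -- the imaginary part of the normalised difference is integer valued
  have h2 : ∀ t, ∃ n : ℤ, (l t - m t) - (l 0 - m 0) = n * (2 * Real.pi * I) := by
    intro t
    have : exp (l t - m t) = exp (l 0 - m 0) := by rw [h1, h1]
    obtain ⟨n, hn⟩ := Complex.exp_eq_exp_iff_exists_int.1 this
    exact ⟨n, by rw [hn]; ring⟩
  choose n hn using h2
  have hc : Continuous (fun t => (((l t - m t) - (l 0 - m 0)) / (2 * Real.pi * I)).re) := by
    fun_prop
  have hne : (2 * Real.pi * I : ℂ) ≠ 0 := Complex.two_pi_I_ne_zero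
  have he : (fun t => (((l t - m t) - (l 0 - m 0)) / (2 * Real.pi * I)).re)
      = fun t => ((n t : ℤ) : ℝ) := by
    funext t
    rw [hn t, mul_div_assoc, div_self hne, mul_one]
    simp
  rw [he] at hc
  have hcn : Continuous n := by
    exact (Int.isClosedEmbedding_coe_real.isInducing.continuous_iff).2 hc
  have := PreconnectedSpace.constant (inferInstance : PreconnectedSpace ℝ) hcn (x := 1) (y := 0)
  have h10 := hn 1
  rw [this, ← hn 0] at h10
  linear_combination h10

open Complex in
lemma dl_eq (f l : ℝ → ℂ) (c : ℂ) (hc : c ≠ 0) (hl : Continuous l)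
    (h : ∀ t, exp (l t) = c * f t) : dl f = l 1 - l 0 := by
  have hex : ∃ l : ℝ → ℂ, Continuous l ∧ ∀ t, exp (l t) = f t := by
    refine ⟨fun t => l t - Complex.log c, by fun_prop, fun t => ?_⟩
    rw [Complex.exp_sub, h, Complex.exp_log hc]
    field_simp
  unfold dl
  rw [dif_pos hex]
  refine (log_diff_const _ _ hl hex.choose_spec.1 c ?_).symm
  intro t
  rw [h, hex.choose_spec.2]

open Complex in
lemma dl_exp (f : ℝ → ℂ) (hf : Continuous f) (h0 : ∀ t, f t ≠ 0) :
    exp (dl f) = f 1 / f 0 := by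
  obtain ⟨l, hl, h⟩ := exists_log (fun x => f x.1) (by fun_prop) (fun x => h0 _)
  rw [dl_eq f (fun t => l (t, 0)) 1 one_ne_zero (by fun_prop) (by intro t; simpa using h (t, 0))]
  rw [Complex.exp_sub, h, h]

open Complex in
lemma dl_square (γ δ : ℝ → ℂ) (hγ : Continuous γ) (hδ : Continuous δ)
    (h : ∀ s t, γ s ≠ δ t) :
    dl (fun s => γ s - δ 0) + dl (fun t => δ t - γ 1) =
      dl (fun t => δ t - γ 0) + dl (fun s => γ s - δ 1) := by
  obtain ⟨l, hl, hle⟩ := exists_log (fun x => γ x.1 - δ x.2) (by fun_prop)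
    (fun x => sub_ne_zero.2 (h _ _))
  rw [dl_eq _ (fun t => l (t, 0)) 1 one_ne_zero (by fun_prop) (by intro t; simpa using hle (t, 0)),
    dl_eq _ (fun t => l (1, t)) (-1) (by norm_num) (by fun_prop)
      (by intro t; simpa using hle (1, t)),
    dl_eq _ (fun t => l (0, t)) (-1) (by norm_num) (by fun_prop)
      (by intro t; simpa using hle (0, t)),
    dl_eq _ (fun t => l (t, 1)) 1 one_ne_zero (by fun_prop) (by intro t; simpa using hle (t, 1))]
  ring

/-- The sign of an ordered pair of indices. -/
def sg {n : ℕ} (i j : Fin n) : ℤ := if j < i then 1 else -1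

open Complex in
/-- The fundamental parity relation of a drawing in which independent edges are disjoint. -/
lemma crossing_relation {n : ℕ} (e : Fin n → Fin n → Prop) (q : Fin n → ℂ)
    (hq : Function.Injective q)
    (γ : Fin n → Fin n → ℝ → ℂ)
    (hc : ∀ i j, e i j → Continuous (γ i j))
    (h0 : ∀ i j, e i j → γ i j 0 = q i) (h1 : ∀ i j, e i j → γ i j 1 = q j)
    (hav : ∀ i j k, e i j → k ≠ i → k ≠ j → ∀ t, γ i j t ≠ q k)
    (hdis : ∀ i j k l, e i j → e k l → i ≠ k → i ≠ l → j ≠ k → j ≠ l →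
      ∀ s t, γ i j s ≠ γ k l t) :
    ∃ N : Fin n → Fin n → Fin n → ℤ, ∀ i j k l, e i j → e k l →
      i ≠ k → i ≠ l → j ≠ k → j ≠ l →
      sg j k - sg i k - sg j l + sg i l =
        2 * (N k l i - N k l j - N i j k + N i j l) := by
  let lam : Fin n → Fin n → ℂ := fun i k =>
    if k < i then Complex.log (q k - q i) + Real.pi * I else Complex.log (q i - q k)
  have hlam : ∀ i k, i ≠ k → exp (lam i k) = q i - q k := by
    intro i k hik
    have h1 : q i - q k ≠ 0 := sub_ne_zero.2 (fun h => hik (hq h))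
    have h2 : q k - q i ≠ 0 := sub_ne_zero.2 (fun h => hik (hq h.symm))
    simp only [lam]
    split_ifs with h
    · rw [Complex.exp_add, Complex.exp_log h2, Complex.exp_pi_mul_I]; ring
    · rw [Complex.exp_log h1]
  have hsg : ∀ i k, i ≠ k → lam i k - lam k i = (sg i k : ℂ) * (Real.pi * I) := by
    intro i k hik
    simp only [lam, sg]
    rcases lt_or_gt_of_ne hik with h | h
    · rw [if_neg h.not_gt, if_pos h, if_neg h.not_gt]; push_cast; ring
    · rw [if_neg h.not_gt, if_pos h, if_pos h]; push_cast; ring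
  have hN : ∀ i j k, ∃ m : ℤ, e i j → k ≠ i → k ≠ j →
      dl (fun t => γ i j t - q k) = lam j k - lam i k + m * (2 * Real.pi * I) := by
    intro i j k
    by_cases hh : e i j ∧ k ≠ i ∧ k ≠ j
    · obtain ⟨he, hi, hj⟩ := hh
      have := dl_exp (fun t => γ i j t - q k) ((hc i j he).sub continuous_const)
        (fun t => sub_ne_zero.2 (hav i j k he hi hj t))
      simp only [h0 i j he, h1 i j he] at this
      rw [← hlam i k hi.symm, ← hlam j k hj.symm, ← Complex.exp_sub] at this
      obtain ⟨m, hm⟩ := Complex.exp_eq_exp_iff_exists_int.1 this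
      exact ⟨m, fun _ _ _ => hm⟩
    · exact ⟨0, fun a b c => absurd ⟨a, b, c⟩ hh⟩
  choose N hN using hN
  refine ⟨N, fun i j k l hij hkl hik hil hjk hjl => ?_⟩
  have := dl_square (γ i j) (γ k l) (hc _ _ hij) (hc _ _ hkl)
    (hdis i j k l hij hkl hik hil hjk hjl)
  rw [h0 i j hij, h1 i j hij, h0 k l hkl, h1 k l hkl, hN i j k hij hik.symm hjk.symm,
    hN i j l hij hil.symm hjl.symm, hN k l i hkl hik hil, hN k l j hkl hjk hjl] at this
  have a1 := hsg j k hjk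
  have a2 := hsg i k hik
  have a3 := hsg j l hjl
  have a4 := hsg i l hil
  have hpi : (Real.pi * I : ℂ) ≠ 0 := by
    simp [Real.pi_ne_zero]
  have key : ((sg j k - sg i k - sg j l + sg i l : ℤ) : ℂ) * (Real.pi * I) =
      ((2 * (N k l i - N k l j - N i j k + N i j l) : ℤ) : ℂ) * (Real.pi * I) := by
    push_cast
    linear_combination this - a1 + a2 + a3 - a4
  exact_mod_cast mul_right_cancel₀ hpi key

lemma K5_parity (N : Fin 5 → Fin 5 → Fin 5 → ℤ)
    (h : ∀ i j k l : Fin 5, i < j → k < l → i ≠ k → i ≠ l → j ≠ k → j ≠ l →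
      sg j k - sg i k - sg j l + sg i l =
        2 * (N k l i - N k l j - N i j k + N i j l)) : False := by
  have a1 := h 0 1 2 3 (by decide) (by decide) (by decide) (by decide) (by decide) (by decide)
  have a2 := h 0 1 2 4 (by decide) (by decide) (by decide) (by decide) (by decide) (by decide)
  have a3 := h 0 1 3 4 (by decide) (by decide) (by decide) (by decide) (by decide) (by decide)
  have a4 := h 0 2 1 3 (by decide) (by decide) (by decide) (by decide) (by decide) (by decide)
  have a5 := h 0 2 1 4 (by decide) (by decide) (by decide) (by decide) (by decide) (by decide)
  have a6 := h 0 2 3 4 (by decide) (by decide) (by decide) (by decide) (by decide) (by decide)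
  have a7 := h 0 3 1 2 (by decide) (by decide) (by decide) (by decide) (by decide) (by decide)
  have a8 := h 0 3 1 4 (by decide) (by decide) (by decide) (by decide) (by decide) (by decide)
  have a9 := h 0 3 2 4 (by decide) (by decide) (by decide) (by decide) (by decide) (by decide)
  have a10 := h 0 4 1 2 (by decide) (by decide) (by decide) (by decide) (by decide) (by decide)
  have a11 := h 0 4 1 3 (by decide) (by decide) (by decide) (by decide) (by decide) (by decide)
  have a12 := h 0 4 2 3 (by decide) (by decide) (by decide) (by decide) (by decide) (by decide)
  have a13 := h 1 2 3 4 (by decide) (by decide) (by decide) (by decide) (by decide) (by decide)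
  have a14 := h 1 3 2 4 (by decide) (by decide) (by decide) (by decide) (by decide) (by decide)
  have a15 := h 1 4 2 3 (by decide) (by decide) (by decide) (by decide) (by decide) (by decide)
  simp [sg] at a1 a2 a3 a4 a5 a6 a7 a8 a9 a10 a11 a12 a13 a14 a15
  omega

lemma K33_parity (N : Fin 6 → Fin 6 → Fin 6 → ℤ)
    (h : ∀ i j k l : Fin 6, (i < 3 ∧ 3 ≤ j) → (k < 3 ∧ 3 ≤ l) →
      i ≠ k → i ≠ l → j ≠ k → j ≠ l →
      sg j k - sg i k - sg j l + sg i l =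
        2 * (N k l i - N k l j - N i j k + N i j l)) : False := by
  have hh : ∀ i k j l : Fin 6, i < 3 → k < 3 → 3 ≤ j → 3 ≤ l → i < k → j ≠ l →
      (1 : ℤ) - sg j l = 2 * (N k l i - N k l j - N i j k + N i j l) - 1 + 1 := by
    intro i k j l hi hk hj hl hik hjl
    have := h i j k l ⟨hi, hj⟩ ⟨hk, hl⟩ hik.ne (by omega) (by omega) hjl
    have e1 : sg j k = 1 := if_pos (by omega)
    have e2 : sg i k = -1 := if_neg (by omega)
    have e3 : sg i l = -1 := if_neg (by omega)
    omega
  have b : ∀ i k : Fin 6, i < 3 → k < 3 → i < k → _ := fun i k hi hk hik =>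
    And.intro (And.intro (hh i k 3 4 hi hk (by decide) (by decide) hik (by decide))
      (hh i k 4 3 hi hk (by decide) (by decide) hik (by decide)))
      (And.intro (And.intro (hh i k 3 5 hi hk (by decide) (by decide) hik (by decide))
      (hh i k 5 3 hi hk (by decide) (by decide) hik (by decide)))
      (And.intro (hh i k 4 5 hi hk (by decide) (by decide) hik (by decide))
      (hh i k 5 4 hi hk (by decide) (by decide) hik (by decide))))
  have b1 := b 0 1 (by decide) (by decide) (by decide)
  have b2 := b 0 2 (by decide) (by decide) (by decide)
  have b3 := b 1 2 (by decide) (by decide) (by decide)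
  simp [sg] at b1 b2 b3
  omega

end CanvasAux

/-! ### Weak drawings and minor models -/

namespace CanvasAux

/-- A weak drawing of a graph in the plane: independent edges are disjoint. -/
structure IDraw {W : Type u} (adj : W → W → Prop) where
  pos : W → ℝ × ℝ
  E : W → W → Set (ℝ × ℝ)
  symm : ∀ u v, adj u v → adj v u
  pc : ∀ u v, adj u v → IsPathConnected (E u v)
  mem_l : ∀ u v, adj u v → pos u ∈ E u v
  mem_r : ∀ u v, adj u v → pos v ∈ E u v
  inj : Function.Injective pos
  avoid : ∀ u v w, adj u v → w ≠ u → w ≠ v → pos w ∉ E u v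
  disj : ∀ u v x y, adj u v → adj x y → u ≠ x → u ≠ y → v ≠ x → v ≠ y →
    Disjoint (E u v) (E x y)

/-- A set of vertices inducing a connected subgraph. -/
def Conn {W : Type u} (adj : W → W → Prop) (S : Set W) : Prop :=
  S.Nonempty ∧ ∀ u ∈ S, ∀ v ∈ S,
    Relation.ReflTransGen (fun x y => adj x y ∧ x ∈ S ∧ y ∈ S) u v

variable {W : Type u} {adj : W → W → Prop}

lemma Conn.singleton (x : W) : Conn adj {x} := by
  refine ⟨⟨x, rfl⟩, ?_⟩
  rintro u rfl v rfl
  exact .refl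

lemma rtg_mono {S T : Set W} (h : S ⊆ T) {u v : W}
    (huv : Relation.ReflTransGen (fun x y => adj x y ∧ x ∈ S ∧ y ∈ S) u v) :
    Relation.ReflTransGen (fun x y => adj x y ∧ x ∈ T ∧ y ∈ T) u v :=
  Relation.ReflTransGen.mono (fun _ _ h' => ⟨h'.1, h h'.2.1, h h'.2.2⟩) _ _ huv

lemma Conn.union_of_adj (hs : ∀ u v, adj u v → adj v u) {S T : Set W}
    (hS : Conn adj S) (hT : Conn adj T)
    (h : ∃ s ∈ S, ∃ t ∈ T, adj s t) : Conn adj (S ∪ T) := by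
  obtain ⟨s, hsS, t, htT, hst⟩ := h
  have hS' : ∀ u ∈ S, ∀ v ∈ S, _ := fun u hu v hv =>
    rtg_mono (subset_union_left (t := T)) (hS.2 u hu v hv)
  have hT' : ∀ u ∈ T, ∀ v ∈ T, _ := fun u hu v hv =>
    rtg_mono (subset_union_right (s := S)) (hT.2 u hu v hv)
  refine ⟨⟨s, Or.inl hsS⟩, ?_⟩
  rintro u (hu | hu) v (hv | hv)
  · exact hS' u hu v hv
  · exact (hS' u hu s hsS).trans
      (.head ⟨hst, Or.inl hsS, Or.inr htT⟩ (hT' t htT v hv))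
  · exact (hT' u hu t htT).trans
      (.head ⟨hs _ _ hst, Or.inr htT, Or.inl hsS⟩ (hS' s hsS v hv))
  · exact hT' u hu v hv

lemma Conn.union_of_mem {S T : Set W}
    (hS : Conn adj S) (hT : Conn adj T) {z : W} (hzS : z ∈ S) (hzT : z ∈ T) :
    Conn adj (S ∪ T) := by
  have hS' : ∀ u ∈ S, ∀ v ∈ S, _ := fun u hu v hv =>
    rtg_mono (subset_union_left (t := T)) (hS.2 u hu v hv)
  have hT' : ∀ u ∈ T, ∀ v ∈ T, _ := fun u hu v hv =>
    rtg_mono (subset_union_right (s := S)) (hT.2 u hu v hv)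
  refine ⟨⟨z, Or.inl hzS⟩, ?_⟩
  rintro u (hu | hu) v (hv | hv)
  · exact hS' u hu v hv
  · exact (hS' u hu z hzS).trans (hT' z hzT v hv)
  · exact (hT' u hu z hzT).trans (hS' z hzS v hv)
  · exact hT' u hu v hv

/-- The drawing of the subgraph induced on `B`. -/
def IDraw.span (D : IDraw adj) (B : Set W) : Set (ℝ × ℝ) :=
  {p | (∃ u ∈ B, p = D.pos u) ∨ ∃ u ∈ B, ∃ v ∈ B, adj u v ∧ p ∈ D.E u v}

lemma IDraw.span_disjoint (D : IDraw adj) {B C : Set W} (h : Disjoint B C) :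
    Disjoint (D.span B) (D.span C) := by
  have hne : ∀ u ∈ B, ∀ v ∈ C, u ≠ v := fun u hu v hv huv =>
    Set.disjoint_left.1 h hu (huv ▸ hv)
  rw [Set.disjoint_left]
  rintro p (⟨u, hu, rfl⟩ | ⟨u, hu, v, hv, huv, hp⟩) (⟨x, hx, hp'⟩ | ⟨x, hx, y, hy, hxy, hp'⟩)
  · exact hne u hu x hx (D.inj hp')
  · exact D.avoid x y u hxy (hne u hu x hx) (hne u hu y hy) hp'
  · subst hp'
    exact D.avoid u v x huv (hne u hu x hx).symm (hne v hv x hx).symm hp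
  · exact Set.disjoint_left.1 (D.disj u v x y huv hxy (hne u hu x hx) (hne u hu y hy)
      (hne v hv x hx) (hne v hv y hy)) hp hp'

lemma IDraw.span_joined (D : IDraw adj) {B : Set W} (h : Conn adj B) {u v : W}
    (hu : u ∈ B) (hv : v ∈ B) : JoinedIn (D.span B) (D.pos u) (D.pos v) := by
  have := h.2 u hu v hv
  induction this with
  | refl => exact JoinedIn.refl (Or.inl ⟨u, hu, rfl⟩)
  | tail _ hbc ih =>
    refine (ih hbc.2.1).trans ?_
    exact ((D.pc _ _ hbc.1).joinedIn _ (D.mem_l _ _ hbc.1) _ (D.mem_r _ _ hbc.1)).mono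
      (fun p hp => Or.inr ⟨_, hbc.2.1, _, hbc.2.2, hbc.1, hp⟩)

/-- A minor model in a weakly drawn graph yields the parity relations. -/
lemma model_relation (D : IDraw adj) {n : ℕ} (e : Fin n → Fin n → Prop) (B : Fin n → Set W)
    (hne : ∀ i, (B i).Nonempty) (hd : ∀ i j, i ≠ j → Disjoint (B i) (B j))
    (hB : ∀ i j, e i j → Conn adj (B i ∪ B j)) :
    ∃ N : Fin n → Fin n → Fin n → ℤ, ∀ i j k l, e i j → e k l →
      i ≠ k → i ≠ l → j ≠ k → j ≠ l →
      sg j k - sg i k - sg j l + sg i l =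
        2 * (N k l i - N k l j - N i j k + N i j l) := by
  classical
  choose r hr using hne
  let f : ℝ × ℝ → ℂ := Complex.equivRealProdCLM.symm
  have hfc : Continuous f := Complex.equivRealProdCLM.symm.continuous
  have hfi : Function.Injective f := Complex.equivRealProdCLM.symm.injective
  have hJ : ∀ i j, ∃ γ : ℝ → ℝ × ℝ, e i j → Continuous γ ∧ γ 0 = D.pos (r i) ∧
      γ 1 = D.pos (r j) ∧ ∀ t, γ t ∈ D.span (B i ∪ B j) := by
    intro i j
    by_cases hij : e i j
    · obtain ⟨γ, hγ⟩ := D.span_joined (hB i j hij) (Or.inl (hr i)) (Or.inr (hr j))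
      refine ⟨γ.extend, fun _ => ⟨γ.continuous_extend, by simp, by simp, fun t => ?_⟩⟩
      exact hγ (Set.projIcc 0 1 zero_le_one t)
    · exact ⟨fun _ => 0, fun h => absurd h hij⟩
  choose γ hγ using hJ
  refine crossing_relation e (fun i => f (D.pos (r i))) ?_ (fun i j t => f (γ i j t))
    (fun i j h => hfc.comp (hγ i j h).1) (fun i j h => by rw [(hγ i j h).2.1])
    (fun i j h => by rw [(hγ i j h).2.2.1]) ?_ ?_
  · intro i j hij
    by_contra hne
    have := D.inj (hfi hij)
    exact Set.disjoint_left.1 (hd i j hne) (hr i) (this ▸ hr j)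
  · intro i j k hij hki hkj t ht
    have h1 := (hγ i j hij).2.2.2 t
    rw [hfi ht] at h1
    refine Set.disjoint_left.1 (D.span_disjoint (B := B i ∪ B j) (C := B k) ?_) h1
      (Or.inl ⟨_, hr k, rfl⟩)
    exact Set.disjoint_union_left.2 ⟨hd _ _ hki.symm, hd _ _ hkj.symm⟩
  · intro i j k l hij hkl hik hil hjk hjl s t hst
    have h1 := (hγ i j hij).2.2.2 s
    rw [hfi hst] at h1
    refine Set.disjoint_left.1 (D.span_disjoint (B := B i ∪ B j) (C := B k ∪ B l) ?_) h1
      ((hγ k l hkl).2.2.2 t)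
    exact Set.disjoint_union_left.2 ⟨Set.disjoint_union_right.2 ⟨hd _ _ hik, hd _ _ hil⟩,
      Set.disjoint_union_right.2 ⟨hd _ _ hjk, hd _ _ hjl⟩⟩

lemma Conn.union_comm {S T : Set W} (h : Conn adj (S ∪ T)) : Conn adj (T ∪ S) := by
  rwa [Set.union_comm]

/-- No `K₅` minor. -/
lemma no_K5 (D : IDraw adj) (B : Fin 5 → Set W)
    (hne : ∀ i, (B i).Nonempty) (hd : ∀ i j, i < j → Disjoint (B i) (B j))
    (hB : ∀ i j, i < j → Conn adj (B i ∪ B j)) : False := by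
  have hd' : ∀ i j, i ≠ j → Disjoint (B i) (B j) := fun i j hij =>
    (lt_or_gt_of_ne hij).elim (hd i j) (fun h => (hd j i h).symm)
  obtain ⟨N, hN⟩ := model_relation D (fun i j => i < j) B hne hd' hB
  exact K5_parity N hN

/-- No `K₃,₃` minor. -/
lemma no_K33 (D : IDraw adj) (B : Fin 6 → Set W)
    (hne : ∀ i, (B i).Nonempty) (hd : ∀ i j, i < j → Disjoint (B i) (B j))
    (hB : ∀ i j, i < 3 → 3 ≤ j → Conn adj (B i ∪ B j)) : False := by
  have hd' : ∀ i j, i ≠ j → Disjoint (B i) (B j) := fun i j hij =>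
    (lt_or_gt_of_ne hij).elim (hd i j) (fun h => (hd j i h).symm)
  obtain ⟨N, hN⟩ := model_relation D (fun i j => i < 3 ∧ 3 ≤ j) B hne hd'
    (fun i j h => hB i j h.1 h.2)
  exact K33_parity N hN

/-- `Z` links `a` and `b`: either `Z` is empty and `a`, `b` are adjacent, or `Z` is connected
and has neighbours of both. -/
def Link (adj : W → W → Prop) (a b : W) (Z : Set W) : Prop :=
  (Z = ∅ ∧ adj a b) ∨ (Conn adj Z ∧ (∃ z ∈ Z, adj a z) ∧ ∃ z ∈ Z, adj b z)

/-- A path from `a` to `b` can be shortened to a link avoiding `a` and `b`. -/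
lemma exists_link (hs : ∀ u v, adj u v → adj v u) {S : Set W} {a b : W} (hab : a ≠ b)
    (h : Relation.ReflTransGen (fun x y => adj x y ∧ x ∈ S ∧ y ∈ S) a b) :
    ∃ Z, Z ⊆ S ∧ a ∉ Z ∧ b ∉ Z ∧ Link adj a b Z := by
  -- invariant: the end vertex is `a`, or some link reaches it
  have key : ∀ c, Relation.ReflTransGen (fun x y => adj x y ∧ x ∈ S ∧ y ∈ S) a c →
      (c = a ∨ ∃ Z, Z ⊆ S ∧ a ∉ Z ∧ b ∉ Z ∧ Conn adj Z ∧ (∃ z ∈ Z, adj a z) ∧ c ∈ Z) ∨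
      ∃ Z, Z ⊆ S ∧ a ∉ Z ∧ b ∉ Z ∧ Link adj a b Z := by
    intro c hc
    induction hc with
    | refl => exact Or.inl (Or.inl rfl)
    | @tail c d hac hcd ih =>
      rcases ih with ih | ih
      swap
      · exact Or.inr ih
      by_cases hda : d = a
      · exact Or.inl (Or.inl hda)
      rcases ih with rfl | ⟨Z, hZS, haZ, hbZ, hZ, haz, hcZ⟩
      · by_cases hdb : d = b
        · subst hdb
          exact Or.inr ⟨∅, by simp, by simp, by simp, Or.inl ⟨rfl, hcd.1⟩⟩
        · exact Or.inl (Or.inr ⟨{d}, by simpa using hcd.2.2, by simpa using Ne.symm hda,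
            by simpa using Ne.symm hdb, Conn.singleton d, ⟨d, rfl, hcd.1⟩, rfl⟩)
      · by_cases hdb : d = b
        · subst hdb
          exact Or.inr ⟨Z, hZS, haZ, hbZ, Or.inr ⟨hZ, haz, c, hcZ, hs _ _ hcd.1⟩⟩
        · refine Or.inl (Or.inr ⟨Z ∪ {d}, ?_, ?_, ?_, ?_, ?_, ?_⟩)
          · exact Set.union_subset hZS (by simpa using hcd.2.2)
          · simp [haZ, Ne.symm hda]
          · simp [hbZ, Ne.symm hdb]
          · exact hZ.union_of_adj hs (Conn.singleton d) ⟨c, hcZ, d, rfl, hcd.1⟩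
          · obtain ⟨z, hz, h⟩ := haz
            exact ⟨z, Or.inl hz, h⟩
          · exact Or.inr rfl
  rcases key b h with h | h
  · rcases h with h | ⟨Z, _, _, hb, _, _, hb'⟩
    · exact absurd h hab.symm
    · exact absurd hb' hb
  · exact h

end CanvasAux

/-! ### The combinatorial core: an outer vertex with three outer neighbours -/

namespace CanvasAux

variable {W : Type u} {adj : W → W → Prop}

/-- `A` has a neighbour of `v`. -/
def Hit (adj : W → W → Prop) (A : Set W) (v : W) : Prop := ∃ a ∈ A, adj a v

lemma conn_pair (D : IDraw adj) {S T : Set W} (hS : Conn adj S) (hT : Conn adj T)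
    {s t : W} (hs : s ∈ S) (ht : t ∈ T) (h : adj s t) : Conn adj (S ∪ T) :=
  hS.union_of_adj D.symm hT ⟨s, hs, t, ht, h⟩

lemma conn_insert (D : IDraw adj) {S : Set W} (hS : Conn adj S)
    {t : W} (h : Hit adj S t) : Conn adj (S ∪ {t}) := by
  obtain ⟨s, hs, h⟩ := h
  exact conn_pair D hS (Conn.singleton t) hs rfl h

lemma k33_case (D : IDraw adj) {A Z : Set W} (hA : Conn adj A) (hZ : Conn adj Z)
    {x y1 y2 y3 : W} (hxA : x ∉ A) (hxZ : x ∉ Z) (hAZ : Disjoint A Z)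
    (h1A : y1 ∉ A) (h2A : y2 ∉ A) (h3A : y3 ∉ A) (h1Z : y1 ∉ Z) (h2Z : y2 ∉ Z) (h3Z : y3 ∉ Z)
    (h12 : y1 ≠ y2) (h13 : y1 ≠ y3) (h23 : y2 ≠ y3)
    (hx1 : adj x y1) (hx2 : adj x y2) (hx3 : adj x y3)
    (nx1 : x ≠ y1) (nx2 : x ≠ y2) (nx3 : x ≠ y3)
    (ha1 : Hit adj A y1) (ha2 : Hit adj A y2) (ha3 : Hit adj A y3)
    (hz1 : Hit adj Z y1) (hz2 : Hit adj Z y2) (hz3 : Hit adj Z y3) : False := by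
  have hxs : Conn adj {x} := Conn.singleton x
  have g1 : Hit adj {x} y1 := ⟨x, rfl, hx1⟩
  have g2 : Hit adj {x} y2 := ⟨x, rfl, hx2⟩
  have g3 : Hit adj {x} y3 := ⟨x, rfl, hx3⟩
  refine no_K33 D ![A, {x}, Z, {y1}, {y2}, {y3}] ?_ ?_ ?_
  · intro i
    fin_cases i
    exacts [hA.1, hxs.1, hZ.1, ⟨_, rfl⟩, ⟨_, rfl⟩, ⟨_, rfl⟩]
  · intro i j hij
    fin_cases i <;> fin_cases j <;> first
      | exact absurd hij (by decide)
      | (simp [hAZ]; done)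
      | simp_all
  · intro i j hi hj
    fin_cases i <;> fin_cases j <;> first
      | exact absurd hi (by decide)
      | exact absurd hj (by decide)
      | (apply conn_insert D <;> assumption)

lemma k5_case (D : IDraw adj) {A Y1 Y2 Y3 : Set W} (hA : Conn adj A)
    {x : W} (hxA : x ∉ A)
    (c1 : Conn adj Y1) (c2 : Conn adj Y2) (c3 : Conn adj Y3)
    (hx1 : x ∉ Y1) (hx2 : x ∉ Y2) (hx3 : x ∉ Y3)
    (d1 : Disjoint A Y1) (d2 : Disjoint A Y2) (d3 : Disjoint A Y3)
    (d12 : Disjoint Y1 Y2) (d13 : Disjoint Y1 Y3) (d23 : Disjoint Y2 Y3)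
    (hax : Hit adj A x)
    (a1 : ∃ y ∈ Y1, Hit adj A y) (a2 : ∃ y ∈ Y2, Hit adj A y) (a3 : ∃ y ∈ Y3, Hit adj A y)
    (x1 : ∃ y ∈ Y1, adj x y) (x2 : ∃ y ∈ Y2, adj x y) (x3 : ∃ y ∈ Y3, adj x y)
    (e12 : Conn adj (Y1 ∪ Y2)) (e13 : Conn adj (Y1 ∪ Y3)) (e23 : Conn adj (Y2 ∪ Y3)) :
    False := by
  have hxs : Conn adj {x} := Conn.singleton x
  have ga : ∀ Y, Conn adj Y → (∃ y ∈ Y, Hit adj A y) → Conn adj (A ∪ Y) := by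
    rintro Y hY ⟨y, hy, a, ha, hay⟩
    exact conn_pair D hA hY ha hy hay
  have gx : ∀ Y, Conn adj Y → (∃ y ∈ Y, adj x y) → Conn adj ({x} ∪ Y) := by
    rintro Y hY ⟨y, hy, hxy⟩
    exact conn_pair D hxs hY rfl hy hxy
  have f0 := conn_insert D hA hax
  have f1 := ga Y1 c1 a1
  have f2 := ga Y2 c2 a2
  have f3 := ga Y3 c3 a3
  have f4 := gx Y1 c1 x1
  have f5 := gx Y2 c2 x2
  have f6 := gx Y3 c3 x3
  refine no_K5 D ![A, {x}, Y1, Y2, Y3] ?_ ?_ ?_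
  · intro i
    fin_cases i
    exacts [hA.1, hxs.1, c1.1, c2.1, c3.1]
  · intro i j hij
    fin_cases i <;> fin_cases j <;> first
      | exact absurd hij (by decide)
      | assumption
      | (simp; assumption)
  · intro i j hij
    fin_cases i <;> fin_cases j <;> first
      | exact absurd hij (by decide)
      | assumption

lemma Link.conn_left (hs : ∀ u v, adj u v → adj v u) {a b : W} {Z : Set W}
    (h : Link adj a b Z) : Conn adj ({a} ∪ Z) := by
  rcases h with ⟨rfl, _⟩ | ⟨hZ, ⟨z, hz, haz⟩, _⟩
  · simpa using Conn.singleton a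
  · exact (Conn.singleton a).union_of_adj hs hZ ⟨a, rfl, z, hz, haz⟩

lemma Link.symm (hs : ∀ u v, adj u v → adj v u) {a b : W} {Z : Set W}
    (h : Link adj a b Z) : Link adj b a Z := by
  rcases h with ⟨h, h'⟩ | ⟨h1, h2, h3⟩
  · exact Or.inl ⟨h, hs _ _ h'⟩
  · exact Or.inr ⟨h1, h3, h2⟩

/-- If `Z` links `a` and `b`, then `{a} ∪ Z` has an edge to `b`. -/
lemma Link.edge (hs : ∀ u v, adj u v → adj v u) {a b : W} {Z : Set W}
    (h : Link adj a b Z) : ∃ s ∈ ({a} ∪ Z : Set W), adj s b := by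
  rcases h with ⟨rfl, h⟩ | ⟨_, _, ⟨z, hz, hbz⟩⟩
  · exact ⟨a, by simp, h⟩
  · exact ⟨z, Or.inr hz, hs _ _ hbz⟩

/-- Two intersecting links among three vertices yield a `K₃,₃`. -/
lemma two_links (D : IDraw adj) {A Z Z' : Set W} (hA : Conn adj A)
    {x y1 y2 y3 : W} (hxA : x ∉ A) (hxZ : x ∉ Z) (hAZ : Disjoint A Z)
    (hxZ' : x ∉ Z') (hAZ' : Disjoint A Z')
    (h1A : y1 ∉ A) (h2A : y2 ∉ A) (h3A : y3 ∉ A) (h1Z : y1 ∉ Z) (h2Z : y2 ∉ Z) (h3Z : y3 ∉ Z)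
    (h1Z' : y1 ∉ Z') (h2Z' : y2 ∉ Z') (h3Z' : y3 ∉ Z')
    (h12 : y1 ≠ y2) (h13 : y1 ≠ y3) (h23 : y2 ≠ y3)
    (hx1 : adj x y1) (hx2 : adj x y2) (hx3 : adj x y3)
    (nx1 : x ≠ y1) (nx2 : x ≠ y2) (nx3 : x ≠ y3)
    (ha1 : Hit adj A y1) (ha2 : Hit adj A y2) (ha3 : Hit adj A y3)
    (hZ : Link adj y1 y2 Z) (hZ' : Link adj y1 y3 Z') : Disjoint Z Z' := by
  by_contra hcon
  obtain ⟨z, hz, hz'⟩ := Set.not_disjoint_iff.1 hcon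
  rcases hZ with ⟨rfl, _⟩ | ⟨cZ, ⟨u1, hu1, e1⟩, ⟨u2, hu2, e2⟩⟩
  · exact hz
  rcases hZ' with ⟨rfl, _⟩ | ⟨cZ', _, ⟨u3, hu3, e3⟩⟩
  · exact hz'
  have s := D.symm
  refine k33_case D hA (cZ.union_of_mem cZ' hz hz') (x := x) (y1 := y1) (y2 := y2) (y3 := y3)
    hxA ?_ (Set.disjoint_union_right.2 ⟨hAZ, hAZ'⟩) h1A h2A h3A ?_ ?_ ?_ h12 h13 h23 hx1 hx2 hx3
    nx1 nx2 nx3 ha1 ha2 ha3 ⟨u1, Or.inl hu1, s _ _ e1⟩ ⟨u2, Or.inl hu2, s _ _ e2⟩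
    ⟨u3, Or.inr hu3, s _ _ e3⟩
  all_goals simp [*]

lemma star (D : IDraw adj) {A R : Set W} (hA : Conn adj A) (hAR : Disjoint A R)
    {x y1 y2 y3 : W} (hxR : x ∈ R) (h1R : y1 ∈ R) (h2R : y2 ∈ R) (h3R : y3 ∈ R)
    (h12 : y1 ≠ y2) (h13 : y1 ≠ y3) (h23 : y2 ≠ y3)
    (hx1 : adj x y1) (hx2 : adj x y2) (hx3 : adj x y3)
    (nx1 : x ≠ y1) (nx2 : x ≠ y2) (nx3 : x ≠ y3)
    (hax : Hit adj A x) (ha1 : Hit adj A y1) (ha2 : Hit adj A y2) (ha3 : Hit adj A y3)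
    (q1 : Conn adj (R \ {x, y1})) (q2 : Conn adj (R \ {x, y2})) (q3 : Conn adj (R \ {x, y3})) :
    False := by
  have nA : ∀ v ∈ R, v ∉ A := fun v hv hv' => Set.disjoint_left.1 hAR hv' hv
  have s := D.symm
  obtain ⟨Z12, s12, a12, b12, l12⟩ := exists_link s h12
    (q3.2 y1 ⟨h1R, by simp [nx1.symm, h13]⟩ y2 ⟨h2R, by simp [nx2.symm, h23]⟩)
  obtain ⟨Z13, s13, a13, b13, l13⟩ := exists_link s h13
    (q2.2 y1 ⟨h1R, by simp [nx1.symm, h12]⟩ y3 ⟨h3R, by simp [nx3.symm, h23.symm]⟩)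
  obtain ⟨Z23, s23, a23, b23, l23⟩ := exists_link s h23
    (q1.2 y2 ⟨h2R, by simp [nx2.symm, h12.symm]⟩ y3 ⟨h3R, by simp [nx3.symm, h13.symm]⟩)
  have x12 : x ∉ Z12 := fun h => (s12 h).2 (by simp)
  have x13 : x ∉ Z13 := fun h => (s13 h).2 (by simp)
  have x23 : x ∉ Z23 := fun h => (s23 h).2 (by simp)
  have c12 : y3 ∉ Z12 := fun h => (s12 h).2 (by simp)
  have c13 : y2 ∉ Z13 := fun h => (s13 h).2 (by simp)
  have c23 : y1 ∉ Z23 := fun h => (s23 h).2 (by simp)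
  have A12 : Disjoint A Z12 := hAR.mono_right (s12.trans Set.sdiff_subset)
  have A13 : Disjoint A Z13 := hAR.mono_right (s13.trans Set.sdiff_subset)
  have A23 : Disjoint A Z23 := hAR.mono_right (s23.trans Set.sdiff_subset)
  have xA := nA x hxR
  have A1 := nA y1 h1R
  have A2 := nA y2 h2R
  have A3 := nA y3 h3R
  have D1 : Disjoint Z12 Z13 := two_links D hA xA x12 A12 x13 A13 A1 A2 A3 a12 b12 c12 a13 c13 b13
    h12 h13 h23 hx1 hx2 hx3 nx1 nx2 nx3 ha1 ha2 ha3 l12 l13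
  have D2 : Disjoint Z12 Z23 := two_links D hA xA x12 A12 x23 A23 A2 A1 A3 b12 a12 c12 a23 c23 b23
    h12.symm h23 h13 hx2 hx1 hx3 nx2 nx1 nx3 ha2 ha1 ha3 (l12.symm s) l23
  have D3 : Disjoint Z13 Z23 := two_links D hA xA x13 A13 x23 A23 A3 A1 A2 b13 a13 c13 b23 c23 a23
    h13.symm h23.symm h12 hx3 hx1 hx2 nx3 nx1 nx2 ha3 ha1 ha2 (l13.symm s) (l23.symm s)
  have k1 := l12.conn_left s
  have k2 := l23.conn_left s
  have k3 := (l13.symm s).conn_left s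
  obtain ⟨u1, hu1, e1⟩ := l12.edge s
  obtain ⟨u2, hu2, e2⟩ := l23.edge s
  obtain ⟨u3, hu3, e3⟩ := (l13.symm s).edge s
  refine k5_case D hA xA k1 k2 k3 ?_ ?_ ?_ ?_ ?_ ?_ ?_ ?_ ?_ hax ⟨y1, Or.inl rfl, ha1⟩
    ⟨y2, Or.inl rfl, ha2⟩ ⟨y3, Or.inl rfl, ha3⟩ ⟨y1, Or.inl rfl, hx1⟩
    ⟨y2, Or.inl rfl, hx2⟩ ⟨y3, Or.inl rfl, hx3⟩ (conn_pair D k1 k2 hu1 (Or.inl rfl) e1)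
    ((conn_pair D k3 k1 hu3 (Or.inl rfl) e3).union_comm) (conn_pair D k2 k3 hu2 (Or.inl rfl) e2)
  all_goals simp only [Set.mem_union, Set.mem_singleton_iff, Set.disjoint_union_left,
    Set.disjoint_union_right, Set.disjoint_singleton_left, Set.disjoint_singleton_right, not_or]
  · exact ⟨nx1, x12⟩
  · exact ⟨nx2, x23⟩
  · exact ⟨nx3, x13⟩
  · exact ⟨A1, A12⟩
  · exact ⟨A2, A23⟩
  · exact ⟨A3, A13⟩
  · exact ⟨⟨h12.symm, b12⟩, c23, D2⟩
  · exact ⟨⟨h13.symm, c12⟩, a13, D1⟩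
  · exact ⟨⟨h23.symm, b23⟩, c13, D3.symm⟩

/-- A set that cannot be split is connected. -/
lemma conn_of_no_split (hs : ∀ u v, adj u v → adj v u) {S : Set W} (hne : S.Nonempty)
    (h : ∀ D : Set W, D ⊆ S → D.Nonempty → (S \ D).Nonempty →
      ∃ u ∈ D, ∃ v ∈ S \ D, adj u v) : Conn adj S := by
  refine ⟨hne, fun u hu v hv => ?_⟩
  by_contra hcon
  let D : Set W := {w | w ∈ S ∧ Relation.ReflTransGen (fun x y => adj x y ∧ x ∈ S ∧ y ∈ S) u w}
  obtain ⟨a, ⟨haS, ha⟩, b, ⟨hbS, hb⟩, hab⟩ := h D (fun w hw => hw.1) ⟨u, hu, .refl⟩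
    ⟨v, hv, fun h => hcon h.2⟩
  exact hb ⟨hbS, ha.tail ⟨hab, haS, hbS⟩⟩

end CanvasAux

namespace CanvasAux

section Coloring

open scoped Classical

variable {W : Type u} {adj : W → W → Prop}

/-- `φ` is a proper coloring of the graph induced on `R` from the lists `L`. -/
def Col (adj : W → W → Prop) (R : Finset W) (L : W → Finset ℕ) (φ : W → ℕ) : Prop :=
  (∀ v ∈ R, φ v ∈ L v) ∧ ∀ u ∈ R, ∀ v ∈ R, adj u v → φ u ≠ φ v

/-- The list size condition. -/
def Lok (adj : W → W → Prop) (A : Set W) (R : Finset W) (X : Set W) (L : W → Finset ℕ) : Prop :=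
  ∀ v ∈ R, v ∉ X → 3 ≤ (L v).card ∧ (¬Hit adj A v → 5 ≤ (L v).card)

/-- Remove the colors in `S` from the lists of the neighbours of `v` not hit by `A`. -/
noncomputable def redL (adj : W → W → Prop) (A : Set W) (v : W) (S : Finset ℕ)
    (L : W → Finset ℕ) : W → Finset ℕ :=
  fun u => if adj v u ∧ ¬Hit adj A u then L u \ S else L u

lemma redL_hit {A : Set W} {v u : W} {S : Finset ℕ} {L : W → Finset ℕ} (h : Hit adj A u) :
    redL adj A v S L u = L u := by
  simp [redL, h]

lemma lok_red {A A' : Set W} {R : Finset W} {X X' : Set W} {L : W → Finset ℕ} {v : W}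
    {S : Finset ℕ} (hL : Lok adj A R X L) (hS : S.card ≤ 2)
    (hX : ∀ u, u ∈ X → u ∈ X' ∨ u = v)
    (hA : ∀ u ∈ R, u ≠ v → Hit adj A u → Hit adj A' u) (hv : ∀ u ∈ R, adj v u → Hit adj A' u) :
    Lok adj A' (R.erase v) X' (redL adj A v S L) := by
  intro u hu huX
  obtain ⟨huv, huR⟩ := Finset.mem_erase.1 hu
  have huX' : u ∉ X := fun h => by
    rcases hX u h with h | h
    · exact huX h
    · exact huv h
  obtain ⟨h3, h5⟩ := hL u huR huX'
  unfold redL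
  split_ifs with h
  · refine ⟨?_, fun h' => absurd (hv u huR h.1) h'⟩
    have := Finset.le_card_sdiff S (L u)
    have := h5 h.2
    omega
  · exact ⟨h3, fun h' => h5 fun h'' => h' (hA u huR huv h'')⟩

lemma hit_union_left {A B : Set W} {u : W} (h : Hit adj A u) : Hit adj (A ∪ B) u := by
  obtain ⟨a, ha, h⟩ := h
  exact ⟨a, Or.inl ha, h⟩

lemma hit_union_single {A : Set W} {u v : W} (h : adj v u) : Hit adj (A ∪ {v}) u :=
  ⟨v, Or.inr rfl, h⟩

lemma col_ext {A : Set W} {R : Finset W} {L : W → Finset ℕ} {v : W}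
    {S : Finset ℕ} {φ : W → ℕ} {c : ℕ}
    (hs : ∀ u v, adj u v → adj v u) (irr : ∀ v, ¬adj v v)
    (hφ : Col adj (R.erase v) (redL adj A v S L) φ) (hc : c ∈ L v) (hcS : c ∈ S)
    (hh : ∀ u ∈ R, adj v u → Hit adj A u → φ u ≠ c) :
    Col adj R L (Function.update φ v c) := by
  have key : ∀ u ∈ R, u ≠ v → adj v u → φ u ≠ c := by
    intro u hu huv huv'
    by_cases h : Hit adj A u
    · exact hh u hu huv' h
    · have := hφ.1 u (Finset.mem_erase.2 ⟨huv, hu⟩)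
      rw [redL, if_pos ⟨huv', h⟩] at this
      rintro rfl
      exact (Finset.mem_sdiff.1 this).2 hcS
  refine ⟨fun u hu => ?_, fun u hu w hw huw => ?_⟩
  · by_cases huv : u = v
    · subst huv; simpa using hc
    · rw [Function.update_of_ne huv]
      have := hφ.1 u (Finset.mem_erase.2 ⟨huv, hu⟩)
      unfold redL at this
      split_ifs at this
      · exact (Finset.mem_sdiff.1 this).1
      · exact this
  · by_cases huv : u = v
    · subst huv
      have hwu : w ≠ u := fun h => irr u (h ▸ huw)
      rw [Function.update_self, Function.update_of_ne hwu]
      exact (key w hw hwu huw).symm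
    · by_cases hwv : w = v
      · subst hwv
        rw [Function.update_self, Function.update_of_ne huv]
        exact key u hu huv (hs _ _ huw)
      · rw [Function.update_of_ne huv, Function.update_of_ne hwv]
        exact hφ.2 u (Finset.mem_erase.2 ⟨huv, hu⟩) w (Finset.mem_erase.2 ⟨hwv, hw⟩) huw

/-- Gluing colorings of two parts agreeing on the intersection. -/
lemma col_glue {R R1 R2 : Finset W} {L : W → Finset ℕ} {φ ψ : W → ℕ}
    (hs : ∀ u v, adj u v → adj v u)
    (hR : ∀ u ∈ R, u ∈ R1 ∨ u ∈ R2) (h1 : Col adj R1 L φ) (h2 : Col adj R2 L ψ)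
    (hag : ∀ u ∈ R1, u ∈ R2 → φ u = ψ u)
    (hno : ∀ u ∈ R1, u ∉ R2 → ∀ v ∈ R2, v ∉ R1 → ¬adj u v) :
    Col adj R L (fun u => if u ∈ R1 then φ u else ψ u) := by
  have hR2 : ∀ u ∈ R, u ∉ R1 → u ∈ R2 := fun u hu h => (hR u hu).resolve_left h
  refine ⟨fun u hu => ?_, fun u hu v hv huv => ?_⟩
  · by_cases h : u ∈ R1
    · simpa [h] using h1.1 u h
    · simpa [h] using h2.1 u (hR2 u hu h)
  · by_cases hu1 : u ∈ R1 <;> by_cases hv1 : v ∈ R1 <;> simp only [hu1, hv1, if_true, if_false]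
    · exact h1.2 u hu1 v hv1 huv
    · have hv2 := hR2 v hv hv1
      have hu2 : u ∈ R2 := by
        by_contra hu2
        exact hno u hu1 hu2 v hv2 hv1 huv
      rw [hag u hu1 hu2]
      exact h2.2 u hu2 v hv2 huv
    · have hu2 := hR2 u hu hu1
      have hv2 : v ∈ R2 := by
        by_contra hv2
        exact hno v hv1 hv2 u hu2 hu1 (hs _ _ huv)
      rw [hag v hv1 hv2]
      exact h2.2 u hu2 v hv2 huv
    · exact h2.2 u (hR2 u hu hu1) v (hR2 v hv hv1) huv

/-- No precolored vertex. -/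
def P0 (adj : W → W → Prop) (n : ℕ) : Prop :=
  ∀ (A : Set W) (R : Finset W) (L : W → Finset ℕ), Conn adj A → Disjoint A (R : Set W) →
    R.card < n → Lok adj A R ∅ L → ∃ φ, Col adj R L φ

/-- One precolored vertex. -/
def P1 (adj : W → W → Prop) (n : ℕ) : Prop :=
  ∀ (A : Set W) (R : Finset W) (L : W → Finset ℕ), Conn adj A → Disjoint A (R : Set W) →
    R.card < n → ∀ p ∈ R, Hit adj A p → ∀ c ∈ L p, Lok adj A R {p} L →
    ∃ φ, Col adj R L φ ∧ φ p = c

/-- Two adjacent precolored vertices. -/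
def P2 (adj : W → W → Prop) (n : ℕ) : Prop :=
  ∀ (A : Set W) (R : Finset W) (L : W → Finset ℕ), Conn adj A → Disjoint A (R : Set W) →
    R.card < n → ∀ p ∈ R, ∀ q ∈ R, Hit adj A p → Hit adj A q → adj p q →
    ∀ c ∈ L p, ∀ d ∈ L q, c ≠ d → Lok adj A R {p, q} L →
    ∃ φ, Col adj R L φ ∧ φ p = c ∧ φ q = d

lemma disj_erase {A : Set W} {R : Finset W} {v : W} (h : Disjoint A (R : Set W)) :
    Disjoint (A ∪ {v}) ((R.erase v : Finset W) : Set W) := by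
  rw [Set.disjoint_left] at h ⊢
  rintro u (hu | hu) hu'
  · exact h hu (Finset.mem_coe.2 (Finset.mem_of_mem_erase (Finset.mem_coe.1 hu')))
  · exact (Finset.mem_erase.1 (Finset.mem_coe.1 hu')).1 hu

lemma card_erase_lt' {R : Finset W} {v : W} {n : ℕ} (hv : v ∈ R) (h : R.card < n + 1) :
    (R.erase v).card < n := by
  have := Finset.card_erase_lt_of_mem hv
  omega

lemma step0 (hs : ∀ u v, adj u v → adj v u) (irr : ∀ v, ¬adj v v) {n : ℕ}
    (h1 : P1 adj (n + 1)) (h0 : P0 adj n) : P0 adj (n + 1) := by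
  intro A R L hA hAR hn hL
  by_cases hh : ∃ v ∈ R, Hit adj A v
  · obtain ⟨v, hv, hvA⟩ := hh
    have h3 := (hL v hv (by simp)).1
    obtain ⟨c, hc⟩ : (L v).Nonempty := Finset.card_pos.1 (by omega)
    obtain ⟨φ, hφ, _⟩ := h1 A R L hA hAR hn v hv hvA c hc
      (fun u hu _ => hL u hu (by simp))
    exact ⟨φ, hφ⟩
  · push Not at hh
    rcases R.eq_empty_or_nonempty with rfl | ⟨v, hv⟩
    · exact ⟨fun _ => 0, by simp [Col]⟩
    · have h3 := (hL v hv (by simp)).1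
      obtain ⟨c, hc⟩ : (L v).Nonempty := Finset.card_pos.1 (by omega)
      obtain ⟨φ, hφ⟩ := h0 {v} (R.erase v) (redL adj A v {c} L) (Conn.singleton v)
        (by simp) (card_erase_lt' hv hn)
        (lok_red hL (by simp) (by simp) (fun u hu _ h => absurd h (hh u hu))
          (fun u _ h => ⟨v, rfl, h⟩))
      exact ⟨_, col_ext hs irr hφ hc (by simp) (fun u hu _ h => absurd h (hh u hu))⟩

lemma step1 (D : IDraw adj) (irr : ∀ v, ¬adj v v) {n : ℕ}
    (h2 : P2 adj (n + 1)) (h0 : P0 adj n) : P1 adj (n + 1) := by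
  intro A R L hA hAR hn p hp hpA c hc hL
  by_cases hh : ∃ q ∈ R, Hit adj A q ∧ adj p q
  · obtain ⟨q, hq, hqA, hpq⟩ := hh
    have hqp : q ≠ p := fun h => irr p (h ▸ hpq)
    have h3 := (hL q hq (by simpa using hqp)).1
    obtain ⟨d, hd, hdc⟩ : ∃ d ∈ L q, d ≠ c := Finset.exists_mem_ne (by omega) c
    obtain ⟨φ, hφ, h, _⟩ := h2 A R L hA hAR hn p hp q hq hpA hqA hpq c hc d hd hdc.symm
      (fun u hu hu' => hL u hu (fun h => hu' (Or.inl h)))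
    exact ⟨φ, hφ, h⟩
  · push Not at hh
    obtain ⟨φ, hφ⟩ := h0 (A ∪ {p}) (R.erase p) (redL adj A p {c} L) (conn_insert D hA hpA)
      (disj_erase hAR) (card_erase_lt' hp hn)
      (lok_red hL (by simp) (by simp) (fun u hu _ h => hit_union_left h)
        (fun u _ h => hit_union_single h))
    exact ⟨_, col_ext D.symm irr hφ hc (by simp) (fun u hu h h' => absurd h (hh u hu h')), by simp⟩

/-- The case of a separating edge both of whose ends are hit. -/
lemma step_sep (D : IDraw adj) {n : ℕ} (ih : P2 adj n)
    {A : Set W} {R : Finset W} {L : W → Finset ℕ} (hA : Conn adj A)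
    (hAR : Disjoint A (R : Set W)) (hn : R.card < n + 1) {p q : W} (hp : p ∈ R) (hq : q ∈ R)
    (hpA : Hit adj A p) (hqA : Hit adj A q) (hpq : adj p q) {c d : ℕ} (hc : c ∈ L p)
    (hd : d ∈ L q) (hcd : c ≠ d) (hL : Lok adj A R {p, q} L)
    {x y : W} (hx : x ∈ R) (hy : y ∈ R) (hxA : Hit adj A x) (hyA : Hit adj A y) (hxy : adj x y)
    {T : Set W} (hT : T ⊆ (R : Set W) \ {x, y})
    (hT' : (((R : Set W) \ {x, y}) \ T).Nonempty)
    (hno : ∀ u ∈ T, ∀ v ∈ ((R : Set W) \ {x, y}) \ T, ¬adj u v)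
    (hTn : T.Nonempty) (hpT : p ∈ T ∪ {x, y}) (hqT : q ∈ T ∪ {x, y}) :
    ∃ φ, Col adj R L φ ∧ φ p = c ∧ φ q = d := by
  let R1 : Finset W := R.filter (fun u => u ∈ T ∪ {x, y})
  let R2 : Finset W := R.filter (fun u => u ∉ T)
  have hxT : x ∉ T := fun h => (hT h).2 (by simp)
  have hyT : y ∉ T := fun h => (hT h).2 (by simp)
  have m1 : ∀ u, u ∈ R1 ↔ u ∈ R ∧ u ∈ T ∪ {x, y} := fun u => by simp [R1]
  have m2 : ∀ u, u ∈ R2 ↔ u ∈ R ∧ u ∉ T := fun u => by simp [R2]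
  have c1 : R1.card < R.card := by
    obtain ⟨z, hz, hzT⟩ := hT'
    refine Finset.card_lt_card ⟨Finset.filter_subset _ _, fun h => ?_⟩
    rcases ((m1 z).1 (h hz.1)).2 with h | h
    · exact hzT h
    · exact hz.2 h
  have c2 : R2.card < R.card := by
    obtain ⟨z, hz⟩ := hTn
    refine Finset.card_lt_card ⟨Finset.filter_subset _ _, fun h => ?_⟩
    exact ((m2 z).1 (h (hT hz).1)).2 hz
  have s1 : (R1 : Set W) ⊆ R := Finset.coe_subset.2 (Finset.filter_subset _ _)
  have s2 : (R2 : Set W) ⊆ R := Finset.coe_subset.2 (Finset.filter_subset _ _)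
  obtain ⟨φ, hφ, hφp, hφq⟩ := ih A R1 L hA (hAR.mono_right s1) (by omega)
    p ((m1 p).2 ⟨hp, hpT⟩) q ((m1 q).2 ⟨hq, hqT⟩) hpA hqA hpq c hc d hd hcd
    (fun u hu hu' => hL u (s1 hu) hu')
  have hx1 : x ∈ R1 := (m1 x).2 ⟨hx, by simp⟩
  have hy1 : y ∈ R1 := (m1 y).2 ⟨hy, by simp⟩
  obtain ⟨ψ, hψ, hψx, hψy⟩ := ih A R2 L hA (hAR.mono_right s2) (by omega)
    x ((m2 x).2 ⟨hx, hxT⟩) y ((m2 y).2 ⟨hy, hyT⟩) hxA hyA hxy (φ x) (hφ.1 x hx1)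
    (φ y) (hφ.1 y hy1) (hφ.2 x hx1 y hy1 hxy)
    (fun u hu hu' => hL u (s2 hu) (by
      have hu2 := ((m2 u).1 hu).2
      rintro (rfl | rfl)
      · rcases hpT with h | h
        · exact hu2 h
        · exact hu' h
      · rcases hqT with h | h
        · exact hu2 h
        · exact hu' h))
  refine ⟨_, col_glue D.symm (R1 := R1) (R2 := R2) ?_ hφ hψ ?_ ?_, ?_, ?_⟩
  · intro u hu
    by_cases h : u ∈ T
    · exact Or.inl ((m1 u).2 ⟨hu, Or.inl h⟩)
    · exact Or.inr ((m2 u).2 ⟨hu, h⟩)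
  · intro u hu hu2
    rcases ((m1 u).1 hu).2 with h | rfl | rfl
    · exact absurd h ((m2 u).1 hu2).2
    · exact hψx.symm
    · exact hψy.symm
  · intro u hu hu2 v hv hv1
    have huT : u ∈ T := by
      by_contra h
      exact hu2 ((m2 u).2 ⟨s1 hu, h⟩)
    refine hno u huT v ⟨⟨s2 hv, fun h => hv1 ((m1 v).2 ⟨s2 hv, Or.inr h⟩)⟩, ((m2 v).1 hv).2⟩
  · simp only [(m1 p).2 ⟨hp, hpT⟩, if_true, hφp]
  · simp only [(m1 q).2 ⟨hq, hqT⟩, if_true, hφq]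

lemma step2 (D : IDraw adj) (irr : ∀ v, ¬adj v v) {n : ℕ}
    (h1 : P1 adj n) (h2 : P2 adj n) : P2 adj (n + 1) := by
  intro A R L hA hAR hn p hp q hq hpA hqA hpq c hc d hd hcd hL
  by_cases hsep : ∃ x ∈ R, ∃ y ∈ R, Hit adj A x ∧ Hit adj A y ∧ adj x y ∧
      ∃ T ⊆ (R : Set W) \ {x, y}, T.Nonempty ∧ (((R : Set W) \ {x, y}) \ T).Nonempty ∧
      ∀ u ∈ T, ∀ v ∈ ((R : Set W) \ {x, y}) \ T, ¬adj u v
  · obtain ⟨x, hx, y, hy, hxA, hyA, hxy, T, hT, hTn, hT', hno⟩ := hsep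
    by_cases hside : p ∈ T ∪ {x, y} ∧ q ∈ T ∪ {x, y}
    · exact step_sep D h2 hA hAR hn hp hq hpA hqA hpq hc hd hcd hL hx hy hxA hyA hxy hT hT' hno
        hTn hside.1 hside.2
    · have e : ((R : Set W) \ {x, y}) \ (((R : Set W) \ {x, y}) \ T) = T := by
        rw [sdiff_sdiff_right_self]; exact Set.inter_eq_right.2 hT
      refine step_sep D h2 hA hAR hn hp hq hpA hqA hpq hc hd hcd hL hx hy hxA hyA hxy
        (T := ((R : Set W) \ {x, y}) \ T) Set.sdiff_subset (by rwa [e])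
        (by rw [e]; exact fun u hu v hv h => hno v hv u hu (D.symm _ _ h)) hT' ?_ ?_
      · by_contra hp'
        have hpT : p ∈ T := by
          by_contra h
          by_cases h' : p ∈ ({x, y} : Set W)
          · exact hp' (Or.inr h')
          · exact hp' (Or.inl ⟨⟨hp, h'⟩, h⟩)
        have hqT : q ∉ T ∪ {x, y} := fun h => hside ⟨Or.inl hpT, h⟩
        exact hno p hpT q ⟨⟨hq, fun h => hqT (Or.inr h)⟩, fun h => hqT (Or.inl h)⟩ hpq
      · by_contra hq'
        have hqT : q ∈ T := by
          by_contra h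
          by_cases h' : q ∈ ({x, y} : Set W)
          · exact hq' (Or.inr h')
          · exact hq' (Or.inl ⟨⟨hq, h'⟩, h⟩)
        have hpT : p ∉ T ∪ {x, y} := fun h => hside ⟨h, Or.inl hqT⟩
        exact hno q hqT p ⟨⟨hp, fun h => hpT (Or.inr h)⟩, fun h => hpT (Or.inl h)⟩
          (D.symm _ _ hpq)
  · -- every hit vertex has at most two hit neighbours
    have conn : ∀ x ∈ R, ∀ y ∈ R, Hit adj A x → Hit adj A y → adj x y →
        ((R : Set W) \ {x, y}).Nonempty → Conn adj ((R : Set W) \ {x, y}) := by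
      intro x hx y hy hxA hyA hxy hne
      refine conn_of_no_split D.symm hne fun T hT hTn hT' => ?_
      by_contra hcon
      push Not at hcon
      exact hsep ⟨x, hx, y, hy, hxA, hyA, hxy, T, hT, hTn, hT', hcon⟩
    have two : ∀ x ∈ R, ∀ y1 ∈ R, ∀ y2 ∈ R, ∀ y3 ∈ R, Hit adj A x → Hit adj A y1 →
        Hit adj A y2 → Hit adj A y3 → adj x y1 → adj x y2 → adj x y3 →
        y1 ≠ y2 → y1 ≠ y3 → y2 ≠ y3 → False := by
      intro x hx y1 h1R y2 h2R y3 h3R hxA a1 a2 a3 x1 x2 x3 h12 h13 h23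
      have ne : ∀ y, adj x y → x ≠ y := fun y h h' => irr x (h' ▸ h)
      exact star D hA hAR hx h1R h2R h3R h12 h13 h23 x1 x2 x3 (ne _ x1) (ne _ x2) (ne _ x3)
        hxA a1 a2 a3
        (conn x hx y1 h1R hxA a1 x1 ⟨y2, h2R, by simp [(ne _ x2).symm, h12.symm]⟩)
        (conn x hx y2 h2R hxA a2 x2 ⟨y1, h1R, by simp [(ne _ x1).symm, h12]⟩)
        (conn x hx y3 h3R hxA a3 x3 ⟨y1, h1R, by simp [(ne _ x1).symm, h13]⟩)
    have hqp : q ≠ p := fun h => irr p (h ▸ hpq)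
    by_cases hv : ∃ v ∈ R, Hit adj A v ∧ adj p v ∧ v ≠ q
    · obtain ⟨v, hvR, hvA, hpv, hvq⟩ := hv
      have hvp : v ≠ p := fun h => irr p (h ▸ hpv)
      have hLv := (hL v hvR (by simp [hvp, hvq])).1
      have hp' : p ∈ R.erase v := Finset.mem_erase.2 ⟨hvp.symm, hp⟩
      have hq' : q ∈ R.erase v := Finset.mem_erase.2 ⟨hvq.symm, hq⟩
      have main : ∀ S : Finset ℕ, S.card ≤ 2 → ∃ φ, Col adj (R.erase v) (redL adj A v S L) φ ∧
          φ p = c ∧ φ q = d := by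
        intro S hS
        exact h2 (A ∪ {v}) (R.erase v) (redL adj A v S L) (conn_insert D hA hvA)
          (disj_erase hAR) (card_erase_lt' hvR hn) p hp' q hq' (hit_union_left hpA)
          (hit_union_left hqA) hpq c (by rwa [redL_hit hpA]) d (by rwa [redL_hit hqA]) hcd
          (lok_red hL hS (fun u hu => Or.inl hu) (fun u hu _ h => hit_union_left h)
            (fun u _ h => hit_union_single h))
      have fin : ∀ (S : Finset ℕ) (φ : W → ℕ), Col adj (R.erase v) (redL adj A v S L) φ →
          φ p = c → φ q = d → ∀ a ∈ L v, a ∈ S →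
          (∀ u ∈ R, adj v u → Hit adj A u → φ u ≠ a) →
          ∃ φ, Col adj R L φ ∧ φ p = c ∧ φ q = d := by
        intro S φ hφ e1 e2 a ha haS hh
        exact ⟨_, col_ext D.symm irr hφ ha haS hh, by rw [Function.update_of_ne hvp.symm, e1],
          by rw [Function.update_of_ne hvq.symm, e2]⟩
      by_cases hvq' : adj v q
      · have hcard : 0 < (L v \ {c, d}).card := by
          have := Finset.le_card_sdiff {c, d} (L v)
          have : ({c, d} : Finset ℕ).card ≤ 2 := Finset.card_le_two
          omega
        obtain ⟨a, ha⟩ := Finset.card_pos.1 hcard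
        simp only [Finset.mem_sdiff, Finset.mem_insert, Finset.mem_singleton, not_or] at ha
        obtain ⟨φ, hφ, e1, e2⟩ := main {a} (by simp)
        refine fin {a} φ hφ e1 e2 a ha.1 (by simp) fun u hu hvu huA => ?_
        by_cases hup : u = p
        · rw [hup, e1]; exact Ne.symm ha.2.1
        · by_cases huq : u = q
          · rw [huq, e2]; exact Ne.symm ha.2.2
          · exact (two v hvR p hp q hq u hu hvA hpA hqA huA (D.symm _ _ hpv) hvq' hvu hqp.symm
              (Ne.symm hup) (Ne.symm huq)).elim
      · have hcard : 1 < (L v \ {c}).card := by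
          have := Finset.le_card_sdiff {c} (L v)
          have : ({c} : Finset ℕ).card = 1 := Finset.card_singleton c
          omega
        obtain ⟨a, ha, b, hb, hab⟩ := Finset.one_lt_card.1 hcard
        simp only [Finset.mem_sdiff, Finset.mem_singleton] at ha hb
        obtain ⟨φ, hφ, e1, e2⟩ := main {a, b} Finset.card_le_two
        by_cases hgood : ∀ u ∈ R, adj v u → Hit adj A u → φ u ≠ a
        · exact fin _ φ hφ e1 e2 a ha.1 (by simp) hgood
        · push Not at hgood
          obtain ⟨w, hw, hvw, hwA, hwa⟩ := hgood
          have hwp : w ≠ p := by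
            rintro rfl
            exact ha.2 (hwa.symm.trans e1)
          refine fin _ φ hφ e1 e2 b hb.1 (by simp) fun u hu hvu huA => ?_
          by_cases hup : u = p
          · rw [hup, e1]; exact Ne.symm hb.2
          · by_cases huw : u = w
            · rw [huw, hwa]; exact hab
            · exact (two v hvR p hp w hw u hu hvA hpA hwA huA (D.symm _ _ hpv) hvw hvu hwp.symm
                (Ne.symm hup) (Ne.symm huw)).elim
    · push Not at hv
      obtain ⟨φ, hφ, e⟩ := h1 (A ∪ {p}) (R.erase p) (redL adj A p {c} L) (conn_insert D hA hpA)
        (disj_erase hAR) (card_erase_lt' hp hn) q (Finset.mem_erase.2 ⟨hqp, hq⟩)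
        (hit_union_left hqA) d (by rwa [redL_hit hqA])
        (lok_red hL (by simp) (by rintro u (h | h); exacts [Or.inr h, Or.inl h])
          (fun u hu _ h => hit_union_left h) (fun u _ h => hit_union_single h))
      refine ⟨_, col_ext D.symm irr hφ hc (by simp) (fun u hu h h' => ?_), by simp, ?_⟩
      · rw [hv u hu h' h, e]; exact hcd.symm
      · rw [Function.update_of_ne hqp, e]

/-- The main coloring theorem for drawings. -/
lemma all_P (D : IDraw adj) (irr : ∀ v, ¬adj v v) (n : ℕ) :
    P0 adj n ∧ P1 adj n ∧ P2 adj n := by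
  induction n with
  | zero =>
    refine ⟨?_, ?_, ?_⟩
    · intro A R L _ _ hn; omega
    · intro A R L _ _ hn; omega
    · intro A R L _ _ hn; omega
  | succ n ih =>
    obtain ⟨h0, h1, h2⟩ := ih
    have h2' := step2 D irr h1 h2
    have h1' := step1 D irr h2' h0
    exact ⟨step0 D.symm irr h1' h0, h1', h2'⟩

end Coloring

end CanvasAux

namespace CanvasAux

section Topology

lemma isPreconnected_compl_closedBall' {r : ℝ} (hr : 0 < r) :
    IsPreconnected (Metric.closedBall (0 : ℝ × ℝ) r)ᶜ := by
  have hrank : 1 < Module.rank ℝ (ℝ × ℝ) := by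
    simp
    norm_num
  have h := (isConnected_compl_singleton_of_one_lt_rank hrank (0 : ℝ × ℝ)).isPreconnected
  have hc : ContinuousOn (fun x : ℝ × ℝ => (1 + r / ‖x‖) • x) ({0}ᶜ : Set (ℝ × ℝ)) := by
    refine ContinuousOn.smul (continuousOn_const.add
      (continuousOn_const.div continuous_norm.continuousOn ?_)) continuousOn_id
    intro x hx
    exact norm_ne_zero_iff.2 hx
  have e : (fun x : ℝ × ℝ => (1 + r / ‖x‖) • x) '' ({0}ᶜ : Set (ℝ × ℝ)) =
      (Metric.closedBall (0 : ℝ × ℝ) r)ᶜ := by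
    ext y
    simp only [Set.mem_image, Set.mem_compl_iff, Set.mem_singleton_iff, Metric.mem_closedBall,
      dist_zero_right, not_le]
    constructor
    · rintro ⟨x, hx, rfl⟩
      have hx' : 0 < ‖x‖ := norm_pos_iff.2 hx
      have h1 : 0 < 1 + r / ‖x‖ := by positivity
      rw [norm_smul, Real.norm_of_nonneg h1.le]
      field_simp
      linarith
    · intro hy
      have hy0 : 0 < ‖y‖ := hr.trans hy
      have h1 : 0 < 1 - r / ‖y‖ := by
        rw [sub_pos, div_lt_one hy0]; exact hy
      refine ⟨(1 - r / ‖y‖) • y, ?_, ?_⟩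
      · exact smul_ne_zero h1.ne' (norm_pos_iff.1 hy0)
      · rw [norm_smul, Real.norm_of_nonneg h1.le, smul_smul]
        have h2 : (1 + r / ((1 - r / ‖y‖) * ‖y‖)) * (1 - r / ‖y‖) = 1 := by
          have h3 : ‖y‖ - r ≠ 0 := by linarith
          have h4 : (1 - r / ‖y‖) * ‖y‖ = ‖y‖ - r := by field_simp
          rw [h4]
          field_simp
          ring
        rw [h2, one_smul]
  rw [← e]
  exact h.image _ hc

lemma face_conn {K : Set (ℝ × ℝ)} (hK : IsCompact K) {p0 : ℝ × ℝ}
    (h0 : p0 ∈ {p | p ∉ K ∧ ¬Bornology.IsBounded (connectedComponentIn Kᶜ p)}) :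
    IsPathConnected {p | p ∉ K ∧ ¬Bornology.IsBounded (connectedComponentIn Kᶜ p)} := by
  have hop : IsOpen Kᶜ := hK.isClosed.isOpen_compl
  obtain ⟨r, hr, hKr⟩ := hK.isBounded.subset_closedBall_lt 0 0
  have hC := isPreconnected_compl_closedBall' hr
  have hCK : (Metric.closedBall (0 : ℝ × ℝ) r)ᶜ ⊆ Kᶜ := Set.compl_subset_compl.2 hKr
  have key : ∀ p, ¬Bornology.IsBounded (connectedComponentIn Kᶜ p) →
      (Metric.closedBall (0 : ℝ × ℝ) r)ᶜ ⊆ connectedComponentIn Kᶜ p := by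
    intro p hp
    have : ¬ connectedComponentIn Kᶜ p ⊆ Metric.closedBall 0 r :=
      fun h => hp (Metric.isBounded_closedBall.subset h)
    obtain ⟨q, hq, hqC⟩ := Set.not_subset.1 this
    rw [connectedComponentIn_eq hq]
    exact hC.subset_connectedComponentIn hqC hCK
  have e : {p | p ∉ K ∧ ¬Bornology.IsBounded (connectedComponentIn Kᶜ p)} =
      connectedComponentIn Kᶜ p0 := by
    ext p
    constructor
    · rintro ⟨hp, hp'⟩
      have : ¬ connectedComponentIn Kᶜ p ⊆ Metric.closedBall 0 r :=
        fun h => hp' (Metric.isBounded_closedBall.subset h)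
      obtain ⟨q, hq, hqC⟩ := Set.not_subset.1 this
      rw [connectedComponentIn_eq (key p0 h0.2 hqC), ← connectedComponentIn_eq hq]
      exact mem_connectedComponentIn hp
    · intro hp
      refine ⟨connectedComponentIn_subset _ _ hp, ?_⟩
      rw [← connectedComponentIn_eq hp]
      exact h0.2
  rw [e]
  exact (hop.connectedComponentIn.isConnected_iff_isPathConnected).1
    (isConnected_connectedComponentIn_iff.2 h0.1)

variable {V : Type u}

lemma arc_pathConn (G : PlaneGraph V) {u v : V} (h : G.Adj u v) :
    IsPathConnected (G.arc s(u, v)) := by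
  obtain ⟨f, hf, -, e, -⟩ := G.arc_arc u v h
  rw [← e]
  exact ((convex_Icc (0 : ℝ) 1).isPathConnected ⟨0, by simp⟩).image' hf

lemma arc_compact (G : PlaneGraph V) {u v : V} (h : G.Adj u v) :
    IsCompact (G.arc s(u, v)) := by
  obtain ⟨f, hf, -, e, -⟩ := G.arc_arc u v h
  rw [← e]
  exact isCompact_Icc.image_of_continuousOn hf

lemma arc_left (G : PlaneGraph V) {u v : V} (h : G.Adj u v) : G.pos u ∈ G.arc s(u, v) := by
  obtain ⟨f, hf, -, e, h0, -⟩ := G.arc_arc u v h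
  rw [← e, ← h0]
  exact ⟨0, by simp, rfl⟩

lemma arc_right (G : PlaneGraph V) {u v : V} (h : G.Adj u v) : G.pos v ∈ G.arc s(u, v) := by
  rw [Sym2.eq_swap]
  exact arc_left G (G.adj_symm _ _ h)

lemma arcs_compact (G : PlaneGraph V) (Q : V → V → Prop) (hQ : ∀ u v, Q u v → G.Adj u v) :
    IsCompact (⋃ (u : V) (v : V) (_ : Q u v), G.arc s(u, v)) := by
  have e : (⋃ (u : V) (v : V) (_ : Q u v), G.arc s(u, v)) =
      ⋃ u ∈ G.verts, ⋃ v ∈ G.verts, ⋃ (_ : Q u v), G.arc s(u, v) := by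
    ext p
    simp only [Set.mem_iUnion, exists_prop]
    constructor
    · rintro ⟨u, v, h, hp⟩
      exact ⟨u, G.adj_mem _ _ (hQ _ _ h), v, G.adj_mem _ _ (G.adj_symm _ _ (hQ _ _ h)), h, hp⟩
    · rintro ⟨u, _, v, _, h, hp⟩
      exact ⟨u, v, h, hp⟩
  rw [e]
  refine G.finite_verts.isCompact_biUnion fun u _ => G.finite_verts.isCompact_biUnion fun v _ => ?_
  exact isCompact_iUnion fun h => arc_compact G (hQ _ _ h)

lemma image_compact (G : PlaneGraph V) : IsCompact G.image :=
  (G.finite_verts.image _).isCompact.union (arcs_compact G G.Adj fun _ _ h => h)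

lemma arc_sub_image (G : PlaneGraph V) {u v : V} (h : G.Adj u v) : G.arc s(u, v) ⊆ G.image := by
  intro p hp
  refine Or.inr ?_
  simp only [Set.mem_iUnion]
  exact ⟨u, v, h, hp⟩

lemma exists_ball (G : PlaneGraph V) {b : V} (hb : b ∈ G.verts) :
    ∃ ε > 0, (∀ w ∈ G.verts, w ≠ b → G.pos w ∉ Metric.ball (G.pos b) ε) ∧
      ∀ u v, G.Adj u v → u ≠ b → v ≠ b → Disjoint (Metric.ball (G.pos b) ε) (G.arc s(u, v)) := by
  let K : Set (ℝ × ℝ) := G.pos '' (G.verts \ {b}) ∪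
    ⋃ (u : V) (v : V) (_ : G.Adj u v ∧ u ≠ b ∧ v ≠ b), G.arc s(u, v)
  have hK : IsCompact K := ((G.finite_verts.subset Set.sdiff_subset).image _).isCompact.union
    (arcs_compact G (fun u v => G.Adj u v ∧ u ≠ b ∧ v ≠ b) fun _ _ h => h.1)
  have hbK : G.pos b ∈ Kᶜ := by
    rintro (⟨w, ⟨hw, hwb⟩, e⟩ | h)
    · exact hwb (G.pos_injOn hw hb e)
    · simp only [Set.mem_iUnion] at h
      obtain ⟨u, v, ⟨huv, hu, hv⟩, h⟩ := h
      rcases G.arc_avoid u v huv b hb h with h | h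
      · exact hu h.symm
      · exact hv h.symm
  obtain ⟨ε, hε, hsub⟩ := Metric.isOpen_iff.1 hK.isClosed.isOpen_compl _ hbK
  refine ⟨ε, hε, fun w hw hwb h => hsub h (Or.inl ⟨w, ⟨hw, hwb⟩, rfl⟩), ?_⟩
  intro u v huv hu hv
  rw [Set.disjoint_left]
  intro p hp hpArc
  refine hsub hp (Or.inr ?_)
  simp only [Set.mem_iUnion]
  exact ⟨u, v, ⟨huv, hu, hv⟩, hpArc⟩

/-- The graph `G` with an extra vertex adjacent to all outer vertices. -/
def cAdj (G : PlaneGraph V) : Option G.verts → Option G.verts → Prop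
  | none, none => False
  | none, some b => G.OnOuter b
  | some a, none => G.OnOuter a
  | some a, some b => G.Adj a b

/-- The edge sets for `cAdj`. -/
def cE (G : PlaneGraph V) (ε : G.verts → ℝ) :
    Option G.verts → Option G.verts → Set (ℝ × ℝ)
  | none, none => ∅
  | none, some b => G.outerFace ∪ Metric.ball (G.pos b) (ε b)
  | some a, none => G.outerFace ∪ Metric.ball (G.pos a) (ε a)
  | some a, some b => G.arc s((a : V), (b : V))

/-- The positions for `cAdj`. -/
def cPos (G : PlaneGraph V) (p0 : ℝ × ℝ) : Option G.verts → ℝ × ℝ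
  | none => p0
  | some a => G.pos a

lemma exists_draw (G : PlaneGraph V) (hne : G.outerFace.Nonempty) :
    Nonempty (IDraw (cAdj G)) := by
  obtain ⟨p0, hp0⟩ := hne
  have hF : IsPathConnected G.outerFace := face_conn (image_compact G) hp0
  have hFi : ∀ p ∈ G.image, p ∉ G.outerFace := fun p hp h => h.1 hp
  have hpi : ∀ a : G.verts, G.pos a ∈ G.image := fun a => Or.inl ⟨a, a.2, rfl⟩
  choose ε hε hεv hεa using fun b : G.verts => exists_ball G b.2
  have pcE : ∀ b : G.verts, G.OnOuter b →
      IsPathConnected (G.outerFace ∪ Metric.ball (G.pos b) (ε b)) := by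
    intro b hb
    refine hF.union ((convex_ball _ _).isPathConnected ⟨_, Metric.mem_ball_self (hε b)⟩) ?_
    have hcl : G.pos b ∈ closure G.outerFace := frontier_subset_closure hb
    obtain ⟨q, hq, hd⟩ := Metric.mem_closure_iff.1 hcl (ε b) (hε b)
    exact ⟨q, hq, by rwa [Metric.mem_ball, dist_comm]⟩
  have dj : ∀ (b x y : G.verts), G.Adj x y → x ≠ b → y ≠ b →
      Disjoint (G.outerFace ∪ Metric.ball (G.pos b) (ε b)) (G.arc s((x : V), (y : V))) := by
    intro b x y hxy hx hy
    refine Set.disjoint_union_left.2 ⟨?_, hεa b x y hxy (fun h => hx (Subtype.ext h))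
      (fun h => hy (Subtype.ext h))⟩
    exact Set.disjoint_left.2 fun p hp hp' => hFi p (arc_sub_image G hxy hp') hp
  have av : ∀ (b w : G.verts), w ≠ b →
      G.pos w ∉ G.outerFace ∪ Metric.ball (G.pos b) (ε b) := by
    rintro b w hw (h | h)
    · exact hFi _ (hpi w) h
    · exact hεv b w w.2 (fun h => hw (Subtype.ext h)) h
  refine ⟨⟨cPos G p0, cE G ε, ?_, ?_, ?_, ?_, ?_, ?_, ?_⟩⟩
  · rintro (_ | u) (_ | v) h
    · exact h
    · exact h
    · exact h
    · exact G.adj_symm _ _ h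
  · rintro (_ | u) (_ | v) h
    · exact h.elim
    · exact pcE v h
    · exact pcE u h
    · exact arc_pathConn G h
  · rintro (_ | u) (_ | v) h
    · exact h.elim
    · exact Or.inl hp0
    · exact Or.inr (Metric.mem_ball_self (hε u))
    · exact arc_left G h
  · rintro (_ | u) (_ | v) h
    · exact h.elim
    · exact Or.inr (Metric.mem_ball_self (hε v))
    · exact Or.inl hp0
    · exact arc_right G h
  · rintro (_ | u) (_ | v) h
    · rfl
    · exact (hFi _ (hpi v) ((show p0 = G.pos v from h) ▸ hp0)).elim
    · exact (hFi _ (hpi u) ((show G.pos u = p0 from h) ▸ hp0)).elim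
    · exact congrArg some (Subtype.ext (G.pos_injOn u.2 v.2 h))
  · rintro (_ | u) (_ | v) (_ | w) h hu hv
    · exact h.elim
    · exact h.elim
    · exact (hu rfl).elim
    · exact av v w (fun e => hv (congrArg some e))
    · exact (hv rfl).elim
    · exact av u w (fun e => hu (congrArg some e))
    · exact fun h' => hFi _ (arc_sub_image G h h') hp0
    · intro h'
      rcases G.arc_avoid u v h w w.2 h' with e | e
      · exact hu (congrArg some (Subtype.ext e))
      · exact hv (congrArg some (Subtype.ext e))
  · have ne : ∀ {a b : G.verts}, some a ≠ some b → a ≠ b := fun h e => h (congrArg some e)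
    rintro (_ | u) (_ | v) (_ | x) (_ | y) h h' hux huy hvx hvy
    all_goals first
      | exact h.elim
      | exact h'.elim
      | exact (hux rfl).elim
      | exact (huy rfl).elim
      | exact (hvx rfl).elim
      | exact (hvy rfl).elim
      | skip
    · exact dj v x y h' (ne hvx).symm (ne hvy).symm
    · exact dj u x y h' (ne hux).symm (ne huy).symm
    · exact (dj y u v h (ne huy) (ne hvy)).symm
    · exact (dj x u v h (ne hux) (ne hvx)).symm
    · have hs : s((u : V), (v : V)) ≠ s((x : V), (y : V)) := by
        intro e
        rcases Sym2.eq_iff.1 e with ⟨e, _⟩ | ⟨e, _⟩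
        · exact ne hux (Subtype.ext e)
        · exact ne huy (Subtype.ext e)
      refine Set.disjoint_left.2 fun p hp hp' => ?_
      obtain ⟨w, ⟨hw1, hw2⟩, -⟩ := G.arc_meet u v x y h h' hs ⟨hp, hp'⟩
      rcases hw1 with rfl | rfl <;> rcases hw2 with e | e
      · exact ne hux (Subtype.ext e)
      · exact ne huy (Subtype.ext e)
      · exact ne hvx (Subtype.ext e)
      · exact ne hvy (Subtype.ext e)

end Topology

end CanvasAux


/-- Theorem 2.2: if `(G, S, L)` is a canvas and `S` is a path of
length one, then `G` has an `L`-coloring. -/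
theorem canvas_path_length_one_colorable {V : Type u} (G : PlaneGraph V)
    (p1 p2 : V) (L : V → Finset ℕ)
    (h : IsPathCanvas G p1 p2 L) :
    G.HasLColoring L := by
  classical
  obtain ⟨hp12, hC⟩ := h
  have hp1 : p1 ∈ G.verts := hC.sverts_sub (by simp)
  have hp2 : p2 ∈ G.verts := hC.sverts_sub (by simp)
  have ho1 : G.OnOuter p1 := hC.sverts_outer p1 (by simp)
  have ho2 : G.OnOuter p2 := hC.sverts_outer p2 (by simp)
  have hS : pathAdj p1 p2 p1 p2 := Or.inl ⟨rfl, rfl⟩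
  have hadj : G.Adj p1 p2 := hC.sadj_sub _ _ hS
  obtain ⟨φ0, hφ0, hφ0'⟩ := hC.scolorable
  have hne : G.outerFace.Nonempty := by
    by_contra hcon
    have ho := ho1
    rw [Set.not_nonempty_iff_eq_empty] at hcon
    rw [PlaneGraph.OnOuter, hcon, frontier_empty] at ho
    exact ho
  obtain ⟨D⟩ := CanvasAux.exists_draw G hne
  have irr : ∀ v, ¬CanvasAux.cAdj G v v := by
    rintro (_ | v) h
    · exact h
    · exact G.adj_irrefl _ h
  haveI : Fintype G.verts := G.finite_verts.fintype
  let R : Finset (Option G.verts) := Finset.univ.erase none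
  let L' : Option G.verts → Finset ℕ := fun w => w.elim ∅ (fun v => L v)
  have hR : ∀ v : G.verts, some v ∈ R := fun v => by simp [R]
  have hHit : ∀ v : G.verts, G.OnOuter v → CanvasAux.Hit (CanvasAux.cAdj G) {none} (some v) :=
    fun v hv => ⟨none, rfl, hv⟩
  obtain ⟨φ, hφ, -, -⟩ := (CanvasAux.all_P D irr (R.card + 1)).2.2 {none} R L'
    (CanvasAux.Conn.singleton none) (by simp [R]) (Nat.lt_succ_self _)
    (some ⟨p1, hp1⟩) (hR _) (some ⟨p2, hp2⟩) (hR _) (hHit _ ho1) (hHit _ ho2) hadj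
    (φ0 p1) (hφ0 p1 (by simp)) (φ0 p2) (hφ0 p2 (by simp)) (hφ0' _ _ hS) (by
      rintro (_ | v) hv hvX
      · simp [R] at hv
      · refine ⟨hC.card_outside_S v v.2 ?_, fun hh => hC.card_inner v v.2 fun ho => hh (hHit v ho)⟩
        rintro (e | e)
        · exact hvX (Or.inl (congrArg some (Subtype.ext e)))
        · exact hvX (Or.inr (congrArg some (Subtype.ext e))))
  refine ⟨fun v => if hv : v ∈ G.verts then φ (some ⟨v, hv⟩) else 0, fun v hv => ?_,
    fun u v huv => ?_⟩
  · simp only [hv, dif_pos]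
    exact hφ.1 (some ⟨v, hv⟩) (hR _)
  · have hu : u ∈ G.verts := G.adj_mem _ _ huv
    have hv : v ∈ G.verts := G.adj_mem _ _ (G.adj_symm _ _ huv)
    simp only [hu, hv, dif_pos]
    exact hφ.2 (some ⟨u, hu⟩) (hR _) (some ⟨v, hv⟩) (hR _) huv
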